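/- arXiv:math/0402023 — 4 statements merged into one kernel-verified Lean document; each statement's English description precedes it below -/
import Mathlib

section
/- (Lemma 4, lgcd distributivity) Let R, A, B, d be positive braids in B_{n+1}^+. If d is a left greatest common divisor of A and B (i.e. d left-divides A and B in B_{n+1}^+, and every positive braid left-dividing both A and B left-divides d), then R·d is a left greatest common divisor of R·A and R·B. Symmetrically, if d is a right greatest common divisor of A and B, then d·R is a right greatest common divisor of A·R and B·R. -/
/-! The third clause of the gcd property is the only one with content: a common divisor `e`
of `R * A` and `R * B` has to divide `R * d`. If `R * A` and `R * B` have a left gcd `D`, then `R`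
divides `D`, say `D = R * x`; cancelling `R`, `x` divides `A` and `B`, hence `d`, so `e` divides
`D`, which divides `R * d`. So everything rests on the existence of left gcds in `braidPos n`
(`exists_gcd`), which in turn follows by induction on length from the fact that two generators
have a least common right multiple (`exists_lcm_σgen`).

`braidPos n` is a submonoid of the group, so this last fact needs Garside's theorem that positive
words equal in the group are already related by the positive braid relations. Equality of positive
words is described by the inductive relation `WordEq`, which by its shape is left cancellative and
has lcms of generators; that it is transitive (`WordEq.trans_aux`) is Garside's case analysis on
three generators. The quotient monoid `PosMonoid n` has a central element divisible by all
generators, the power `n + 1` of `σ_1 ⋯ σ_n`, so it satisfies the Ore condition and embeds into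
the units of its localization, to which the braid group maps (`wordEq_of_wordProd_eq`).

The statement on right gcds is the image of the one on left gcds under the anti-automorphism
`rev`. -/

/-- The braid relations for the braid group `B_{n+1}` on generators `σ_1, …, σ_n`
(indexed by `Fin n`, with `i : Fin n` representing `σ_{i+1}`). -/
def braidRels (n : ℕ) : Set (FreeGroup (Fin n)) :=
  {r | ∃ i j : Fin n,
    ((i.val + 1 < j.val ∨ j.val + 1 < i.val) ∧
      r = FreeGroup.of i * FreeGroup.of j * (FreeGroup.of j * FreeGroup.of i)⁻¹) ∨
    ((i.val + 1 = j.val ∨ j.val + 1 = i.val) ∧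
      r = FreeGroup.of i * FreeGroup.of j * FreeGroup.of i *
        (FreeGroup.of j * FreeGroup.of i * FreeGroup.of j)⁻¹)}

/-- The braid group `B_{n+1}` on `n + 1` strands, presented by generators and relations. -/
abbrev BraidGroup (n : ℕ) : Type := PresentedGroup (braidRels n)

/-- The generator `σ_{i+1}` of the braid group `B_{n+1}`. -/
def σgen (n : ℕ) (i : Fin n) : BraidGroup n := PresentedGroup.of i

/-- The positive braid monoid `B_{n+1}^+`: the submonoid generated by the `σ_i`. -/
def braidPos (n : ℕ) : Submonoid (BraidGroup n) :=
  Submonoid.closure (Set.range (σgen n))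

/-- A braid is quasipositive if it is a product of conjugates of generators. -/
def Quasipositive {n : ℕ} (b : BraidGroup n) : Prop :=
  ∃ (k : ℕ) (w : Fin k → BraidGroup n) (idx : Fin k → Fin n),
    b = (List.ofFn fun j => w j * σgen n (idx j) * (w j)⁻¹).prod

/-- The `k`-sequence relation `X →^k Y`: `X` reduces to `Y` by deleting `k` generators. -/
inductive KSeq (n : ℕ) : ℕ → BraidGroup n → BraidGroup n → Prop
  | zero (X : BraidGroup n) : KSeq n 0 X X
  | succ (k : ℕ) (u v Y : BraidGroup n) (i : Fin n)
      (hu : u ∈ braidPos n) (hv : v ∈ braidPos n)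
      (h : KSeq n k (u * v) Y) : KSeq n (k + 1) (u * σgen n i * v) Y

/-- The exponent-sum (algebraic length) homomorphism `B_{n+1} → ℤ`, sending each `σ_i` to `1`. -/
def expSum (n : ℕ) : BraidGroup n →* Multiplicative ℤ :=
  PresentedGroup.toGroup (f := fun _ : Fin n => Multiplicative.ofAdd (1 : ℤ)) (by
    rintro r ⟨i, j, ⟨-, rfl⟩ | ⟨-, rfl⟩⟩ <;> simp <;> group)

/-- The algebraic length of a braid: the image under the homomorphism sending `σ_i` to `1`.
On positive braids, this is the length function `ℓ`. -/
def algLength {n : ℕ} (b : BraidGroup n) : ℤ := Multiplicative.toAdd (expSum n b)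

/-- The Garside element `Δ = (σ_1 ⋯ σ_n)(σ_1 ⋯ σ_{n-1}) ⋯ (σ_1 σ_2) σ_1` of `B_{n+1}`. -/
def braidDelta (n : ℕ) : BraidGroup n :=
  ((List.finRange n).reverse.map fun m =>
    (((List.finRange n).filter fun i => i ≤ m).map (σgen n)).prod).prod
/-- `LDvd a b` : `a` left-divides `b` in the positive braid monoid, i.e. `b = a * c`
for some positive braid `c`. -/
def LDvd {n : ℕ} (a b : BraidGroup n) : Prop := ∃ c ∈ braidPos n, b = a * c

/-- `RDvd a b` : `a` right-divides `b` in the positive braid monoid, i.e. `b = c * a`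
for some positive braid `c`. -/
def RDvd {n : ℕ} (a b : BraidGroup n) : Prop := ∃ c ∈ braidPos n, b = c * a

/-! ### Positive words -/

/-- Indices of commuting generators. -/
def Far {n : ℕ} (i j : Fin n) : Prop := i.val + 1 < j.val ∨ j.val + 1 < i.val

/-- Indices of generators satisfying the braid relation. -/
def Adj {n : ℕ} (i j : Fin n) : Prop := i.val + 1 = j.val ∨ j.val + 1 = i.val

lemma Far.symm {n : ℕ} {i j : Fin n} (h : Far i j) : Far j i := Or.symm h

lemma Adj.symm {n : ℕ} {i j : Fin n} (h : Adj i j) : Adj j i := Or.symm h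

lemma eq_or_far_or_adj {n : ℕ} (i j : Fin n) : i = j ∨ Far i j ∨ Adj i j := by
  unfold Far Adj
  rw [Fin.ext_iff]
  omega

lemma Far.ne {n : ℕ} {i : Fin n} (h : Far i i) : False := by unfold Far at h; omega

lemma Adj.ne {n : ℕ} {i : Fin n} (h : Adj i i) : False := by unfold Adj at h; omega

lemma Far.not_adj {n : ℕ} {i j : Fin n} (h : Far i j) (h' : Adj i j) : False := by
  unfold Far at h; unfold Adj at h'; omega

/-- Equality of words in the positive braid monoid, presented so that left cancellation and the
existence of least common multiples of two generators are built into the constructors: two words with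
distinct first letters are related only through the least common multiple of these letters. That
this is a congruence is the content of `WordEq.trans`. -/
inductive WordEq {n : ℕ} : List (Fin n) → List (Fin n) → Prop
  | nil : WordEq [] []
  | cons (i : Fin n) {X Y : List (Fin n)} : WordEq X Y → WordEq (i :: X) (i :: Y)
  | far {i j : Fin n} {X Y Z : List (Fin n)} : Far i j →
      WordEq X (j :: Z) → WordEq Y (i :: Z) → WordEq (i :: X) (j :: Y)
  | adj {i j : Fin n} {X Y Z : List (Fin n)} : Adj i j →
      WordEq X (j :: i :: Z) → WordEq Y (i :: j :: Z) → WordEq (i :: X) (j :: Y)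

namespace WordEq

variable {n : ℕ}

lemma refl : ∀ X : List (Fin n), WordEq X X
  | [] => nil
  | i :: X => cons i (refl X)

lemma symm {X Y : List (Fin n)} (h : WordEq X Y) : WordEq Y X := by
  cases h with
  | nil => exact nil
  | cons i h => exact cons i h.symm
  | far hf h₁ h₂ => exact far hf.symm h₂ h₁
  | adj ha h₁ h₂ => exact adj ha.symm h₂ h₁

lemma length_eq {X Y : List (Fin n)} (h : WordEq X Y) : X.length = Y.length := by
  induction h with
  | nil => rfl
  | cons i _ ih => simpa using ih
  | far _ _ _ ih₁ ih₂ => simp at *; omega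
  | adj _ _ _ ih₁ ih₂ => simp at *; omega

lemma swap {i j : Fin n} (h : Far i j) (Z : List (Fin n)) :
    WordEq (i :: j :: Z) (j :: i :: Z) := far h (refl _) (refl _)

lemma braid {i j : Fin n} (h : Adj i j) (Z : List (Fin n)) :
    WordEq (i :: j :: i :: Z) (j :: i :: j :: Z) := adj h (refl _) (refl _)

lemma cancel {i : Fin n} {X Y : List (Fin n)} (h : WordEq (i :: X) (i :: Y)) : WordEq X Y := by
  cases h with
  | cons _ h => exact h
  | far hf => exact hf.ne.elim
  | adj ha => exact ha.ne.elim

lemma far_inv {i j : Fin n} {X Y : List (Fin n)} (hf : Far i j) (h : WordEq (i :: X) (j :: Y)) :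
    ∃ Z, WordEq X (j :: Z) ∧ WordEq Y (i :: Z) := by
  cases h with
  | cons _ h => exact hf.ne.elim
  | far _ h₁ h₂ => exact ⟨_, h₁, h₂⟩
  | adj ha => exact (hf.not_adj ha).elim

lemma adj_inv {i j : Fin n} {X Y : List (Fin n)} (ha : Adj i j) (h : WordEq (i :: X) (j :: Y)) :
    ∃ Z, WordEq X (j :: i :: Z) ∧ WordEq Y (i :: j :: Z) := by
  cases h with
  | cons _ h => exact ha.ne.elim
  | far hf => exact (hf.not_adj ha).elim
  | adj _ h₁ h₂ => exact ⟨_, h₁, h₂⟩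

/-- Transitivity, one case of the inductive step: the middle word begins with a letter commuting
with the first letter of the left word and braided with that of the right word. -/
lemma trans_far_adj {N : ℕ}
    (tr : ∀ {X Y W : List (Fin n)}, X.length ≤ N → WordEq X Y → WordEq Y W → WordEq X W)
    {i k j : Fin n} {X Y W Z Z' : List (Fin n)} (hik : Far i k) (hkj : Adj k j)
    (hY : Y.length ≤ N)
    (h₁ : WordEq X (k :: Z)) (h₂ : WordEq Y (i :: Z))
    (h₃ : WordEq Y (j :: k :: Z')) (h₄ : WordEq W (k :: j :: Z')) :
    WordEq (i :: X) (j :: W) := by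
  have l₁ := h₁.length_eq
  have l₂ := h₂.length_eq
  have l₃ := h₃.length_eq
  have l₄ := h₄.length_eq
  simp only [List.length_cons] at l₁ l₂ l₃ l₄
  have hZ : WordEq (i :: Z) (j :: k :: Z') := tr (by simp; omega) h₂.symm h₃
  rcases eq_or_far_or_adj i j with rfl | hij | hij
  · exact (hik.not_adj hkj.symm).elim
  · obtain ⟨V, hV, hV'⟩ := far_inv hij hZ
    obtain ⟨U, hU, hU'⟩ := far_inv hik.symm hV'
    have m₁ := hV.length_eq
    have m₂ := hU.length_eq
    have m₃ := hU'.length_eq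
    simp only [List.length_cons] at m₁ m₂ m₃
    refine far hij (Z := k :: j :: U) ?_ ?_
    · refine tr (by omega) h₁ (tr (by simp; omega) (cons k hV) ?_)
      exact tr (by simp; omega) (cons k (cons j hU')) (braid hkj U)
    · refine tr (by omega) h₄ (tr (by simp; omega) (cons k (cons j hU)) ?_)
      exact tr (by simp; omega) (cons k (swap hij.symm U)) (swap hik.symm _)
  · obtain ⟨V, hV, hV'⟩ := adj_inv hij hZ
    obtain ⟨U, hU, hU'⟩ := far_inv hik.symm hV'
    obtain ⟨T, hT, hT'⟩ := adj_inv hkj.symm hU'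
    have m₁ := hV.length_eq
    have m₂ := hU.length_eq
    have m₃ := hU'.length_eq
    have m₄ := hT.length_eq
    have m₅ := hT'.length_eq
    simp only [List.length_cons] at m₁ m₂ m₃ m₄ m₅
    refine adj hij (Z := k :: j :: i :: T) ?_ ?_
    · refine tr (by omega) h₁ (tr (by simp; omega) (cons k hV) ?_)
      refine tr (by simp; omega) (cons k (cons j (cons i hT))) ?_
      refine tr (by simp; omega) (cons k (cons j (swap hik _))) ?_
      refine tr (by simp; omega) (braid hkj _) ?_
      refine tr (by simp; omega) (cons j (cons k (braid hij.symm _))) ?_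
      exact cons j (swap hik.symm _)
    · refine tr (by omega) h₄ (tr (by simp; omega) (cons k (cons j hU)) ?_)
      refine tr (by simp; omega) (cons k (cons j (cons i hT'))) ?_
      refine tr (by simp; omega) (cons k (braid hij.symm _)) ?_
      refine tr (by simp; omega) (swap hik.symm _) ?_
      refine tr (by simp; omega) (cons i (cons k (cons j (swap hik _)))) ?_
      exact cons i (braid hkj _)

/-- The inductive step on word length compares the first letters `i`, `k`, `j` of the three words.
Any two of the three possibly distinct letters are commuting or braided, and in each configuration
the three letters generate a monoid of type `A₁³`, `A₂ × A₁` or `A₃` (or smaller) in which the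
required common multiple is exhibited explicitly. -/
lemma trans_aux : ∀ (N : ℕ) {X Y W : List (Fin n)},
    X.length ≤ N → WordEq X Y → WordEq Y W → WordEq X W := by
  intro N
  induction N with
  | zero =>
    intro X Y W hN h h'
    obtain rfl : X = [] := by simpa using hN
    cases h
    exact h'
  | succ N tr =>
    intro X Y W hN h h'
    cases h with
    | nil => exact h'
    | @cons k X Y h =>
      have l := h.length_eq
      simp only [List.length_cons] at hN
      cases h' with
      | cons _ h' => exact cons k (tr (by omega) h h')
      | far hf h₁ h₂ => exact far hf (tr (by omega) h h₁) h₂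
      | adj ha h₁ h₂ => exact adj ha (tr (by omega) h h₁) h₂
    | @far i k X Y Z hik h₁ h₂ =>
      have l₁ := h₁.length_eq
      have l₂ := h₂.length_eq
      simp only [List.length_cons] at hN l₁ l₂
      cases h' with
      | cons _ h' => exact far hik h₁ (tr (by rw [← h'.length_eq]; omega) h'.symm h₂)
      | @far _ j _ W Z' hkj h₃ h₄ =>
        have l₃ := h₃.length_eq
        have l₄ := h₄.length_eq
        simp only [List.length_cons] at l₃ l₄
        have hZ : WordEq (i :: Z) (j :: Z') := tr (by simp; omega) h₂.symm h₃
        rcases eq_or_far_or_adj i j with rfl | hij | hij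
        · refine cons i (tr (by omega) h₁ (tr (by simp; omega) (cons k hZ.cancel) h₄.symm))
        · obtain ⟨V, hV, hV'⟩ := far_inv hij hZ
          refine far hij (Z := k :: V) ?_ ?_
          · exact tr (by omega) h₁ (tr (by simp; omega) (cons k hV) (swap hkj V))
          · exact tr (by omega) h₄ (tr (by simp; omega) (cons k hV') (swap hik.symm V))
        · obtain ⟨V, hV, hV'⟩ := adj_inv hij hZ
          have m₁ := hV.length_eq
          have m₂ := hV'.length_eq
          simp only [List.length_cons] at m₁ m₂
          refine adj hij (Z := k :: V) ?_ ?_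
          · refine tr (by omega) h₁ (tr (by simp; omega) (cons k hV) ?_)
            exact tr (by simp; omega) (swap hkj _) (cons j (swap hik.symm _))
          · refine tr (by omega) h₄ (tr (by simp; omega) (cons k hV') ?_)
            exact tr (by simp; omega) (swap hik.symm _) (cons i (swap hkj _))
      | adj hkj h₃ h₄ => exact trans_far_adj tr hik hkj (by omega) h₁ h₂ h₃ h₄
    | @adj i k X Y Z hik h₁ h₂ =>
      have l₁ := h₁.length_eq
      have l₂ := h₂.length_eq
      simp only [List.length_cons] at hN l₁ l₂
      cases h' with
      | cons _ h' => exact adj hik h₁ (tr (by rw [← h'.length_eq]; omega) h'.symm h₂)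
      | far hkj h₃ h₄ =>
        exact (trans_far_adj tr hkj.symm hik.symm (by omega) h₄ h₃ h₂ h₁).symm
      | @adj _ j _ W Z' hkj h₃ h₄ =>
        have l₃ := h₃.length_eq
        have l₄ := h₄.length_eq
        simp only [List.length_cons] at l₃ l₄
        have hZ : WordEq (i :: k :: Z) (j :: k :: Z') := tr (by simp; omega) h₂.symm h₃
        rcases eq_or_far_or_adj i j with rfl | hij | hij
        · refine cons i (tr (by omega) h₁ (tr (by simp; omega) (cons k (cons i ?_)) h₄.symm))
          exact hZ.cancel.cancel
        · obtain ⟨V, hV, hV'⟩ := far_inv hij hZ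
          obtain ⟨U, hU, hU'⟩ := adj_inv hkj hV
          obtain ⟨T, hT, hT'⟩ := adj_inv hik.symm hV'
          have m₁ := hV.length_eq
          have m₂ := hU.length_eq
          have m₃ := hU'.length_eq
          have m₄ := hT.length_eq
          have m₅ := hT'.length_eq
          simp only [List.length_cons] at m₁ m₂ m₃ m₄ m₅
          have hUT : WordEq (k :: j :: U) (k :: i :: T) := tr (by simp; omega) hU'.symm hT'
          obtain ⟨S, hS, hS'⟩ := far_inv hij.symm hUT.cancel
          have m₆ := hS.length_eq
          have m₇ := hS'.length_eq
          simp only [List.length_cons] at m₆ m₇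
          refine far hij (Z := k :: j :: i :: k :: S) ?_ ?_
          · refine tr (by omega) h₁ (tr (by simp; omega) (cons k (cons i hU)) ?_)
            refine tr (by simp; omega) (cons k (cons i (cons j (cons k hS)))) ?_
            refine tr (by simp; omega) (cons k (swap hij _)) ?_
            refine tr (by simp; omega) (cons k (cons j (braid hik _))) ?_
            exact braid hkj _
          · refine tr (by omega) h₄ (tr (by simp; omega) (cons k (cons j hT)) ?_)
            refine tr (by simp; omega) (cons k (cons j (cons i (cons k hS')))) ?_
            refine tr (by simp; omega) (cons k (swap hij.symm _)) ?_
            refine tr (by simp; omega) (cons k (cons i (braid hkj.symm _))) ?_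
            refine tr (by simp; omega) (braid hik.symm _) ?_
            exact cons i (cons k (swap hij _))
        · unfold Adj at hik hkj hij
          omega

lemma trans {X Y W : List (Fin n)} (h : WordEq X Y) (h' : WordEq Y W) : WordEq X W :=
  trans_aux X.length le_rfl h h'

lemma append_right {X Y : List (Fin n)} (h : WordEq X Y) (T : List (Fin n)) :
    WordEq (X ++ T) (Y ++ T) := by
  induction h with
  | nil => exact refl _
  | cons i _ ih => exact cons i ih
  | far hf _ _ ih₁ ih₂ => exact far hf ih₁ ih₂
  | adj ha _ _ ih₁ ih₂ => exact adj ha ih₁ ih₂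

lemma append_left (T : List (Fin n)) {X Y : List (Fin n)} (h : WordEq X Y) :
    WordEq (T ++ X) (T ++ Y) := by
  induction T with
  | nil => exact h
  | cons i _ ih => exact cons i ih

lemma append_cancel (T : List (Fin n)) {X Y : List (Fin n)} (h : WordEq (T ++ X) (T ++ Y)) :
    WordEq X Y := by
  induction T with
  | nil => exact h
  | cons i _ ih => exact ih h.cancel

end WordEq

/-! ### A central element -/

section Central

variable {M : Type*} [Monoid M] (s : ℕ → M)

/-- The product `s 0 * s 1 * ⋯ * s (k - 1)` of the first `k` generators. -/
def coxProd : ℕ → M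
  | 0 => 1
  | k + 1 => coxProd k * s k

variable {s}

lemma commute_coxProd (hfar : ∀ i j, i + 1 < j → Commute (s i) (s j)) (k j : ℕ) (h : k < j) :
    Commute (coxProd s k) (s j) := by
  induction k with
  | zero => exact Commute.one_left _
  | succ k ih => exact (ih (by omega)).mul_left (hfar _ _ h)

lemma coxProd_mul {n : ℕ} (hfar : ∀ i j, i + 1 < j → Commute (s i) (s j))
    (hadj : ∀ i, i + 1 < n → s i * s (i + 1) * s i = s (i + 1) * s i * s (i + 1))
    (i k : ℕ) (hk : k ≤ n) (h : i + 1 < k) :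
    coxProd s k * s i = s (i + 1) * coxProd s k := by
  induction k with
  | zero => omega
  | succ k ih =>
    rcases (show i + 1 < k ∨ k = i + 1 by omega) with h' | rfl
    · rw [coxProd, mul_assoc, ← (hfar i k h').eq, ← mul_assoc, ih (by omega) h', mul_assoc]
    · have e := (commute_coxProd hfar i (i + 1) (by omega)).eq
      rw [coxProd, coxProd, mul_assoc, mul_assoc, ← mul_assoc (s i), hadj i (by omega),
        ← mul_assoc, ← mul_assoc, e]
      simp only [mul_assoc]

/-- The product of the first `k + 1` generators, with its first factor split off. -/
lemma coxProd_succ' (k : ℕ) : coxProd s (k + 1) = s 0 * coxProd (fun i => s (i + 1)) k := by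
  induction k with
  | zero => simp [coxProd]
  | succ k ih => rw [coxProd, ih, coxProd, mul_assoc]

lemma coxProd_sq_mul {n : ℕ} (hfar : ∀ i j, i + 1 < j → Commute (s i) (s j))
    (hadj : ∀ i, i + 1 < n + 1 → s i * s (i + 1) * s i = s (i + 1) * s i * s (i + 1)) :
    coxProd s (n + 1) ^ 2 * s n = s 0 * coxProd s (n + 1) ^ 2 := by
  have key : ∀ k ≤ n, coxProd s (n + 1) * coxProd s k =
      coxProd (fun i => s (i + 1)) k * coxProd s (n + 1) := by
    intro k hk
    induction k with
    | zero => simp [coxProd]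
    | succ k ih =>
      rw [coxProd.eq_2 s k, ← mul_assoc, ih (by omega), mul_assoc,
        coxProd_mul hfar hadj k (n + 1) le_rfl (by omega), ← mul_assoc, coxProd.eq_2 _ k]
  calc coxProd s (n + 1) ^ 2 * s n
      = s 0 * (coxProd (fun i => s (i + 1)) n * coxProd s (n + 1)) * s n := by
        rw [pow_two]; nth_rewrite 1 [coxProd_succ']; simp only [mul_assoc]
    _ = s 0 * (coxProd s (n + 1) * coxProd s (n + 1)) := by
        rw [← key n le_rfl]; nth_rewrite 3 [coxProd]; simp only [mul_assoc]
    _ = _ := by rw [pow_two]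

lemma coxProd_pow_mul {n : ℕ} (hfar : ∀ i j, i + 1 < j → Commute (s i) (s j))
    (hadj : ∀ i, i + 1 < n + 1 → s i * s (i + 1) * s i = s (i + 1) * s i * s (i + 1))
    (a i : ℕ) (h : i + a < n + 1) :
    coxProd s (n + 1) ^ a * s i = s (i + a) * coxProd s (n + 1) ^ a := by
  induction a generalizing i with
  | zero => simp
  | succ a ih =>
    rw [pow_succ, mul_assoc, coxProd_mul hfar hadj i (n + 1) le_rfl (by omega), ← mul_assoc,
      ih (i + 1) (by omega), mul_assoc, show i + 1 + a = i + (a + 1) by omega]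

/-- The power `n + 2` of the Coxeter product of the `n + 1` generators (the full twist) is
central. -/
lemma coxProd_central {n : ℕ} (hfar : ∀ i j, i + 1 < j → Commute (s i) (s j))
    (hadj : ∀ i, i + 1 < n + 1 → s i * s (i + 1) * s i = s (i + 1) * s i * s (i + 1))
    (i : ℕ) (h : i < n + 1) :
    coxProd s (n + 1) ^ (n + 2) * s i = s i * coxProd s (n + 1) ^ (n + 2) := by
  have e : coxProd s (n + 1) ^ (n + 2) =
      coxProd s (n + 1) ^ i * coxProd s (n + 1) ^ 2 * coxProd s (n + 1) ^ (n - i) := by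
    rw [← pow_add, ← pow_add]; congr 1; omega
  have h₁ := coxProd_pow_mul hfar hadj (n - i) i (by omega)
  have h₂ := coxProd_sq_mul hfar hadj
  have h₃ := coxProd_pow_mul hfar hadj i 0 (by omega)
  rw [show i + (n - i) = n by omega] at h₁
  rw [zero_add] at h₃
  rw [e, mul_assoc, h₁, mul_assoc, ← mul_assoc _ (s n), h₂, mul_assoc, ← mul_assoc _ (s 0), h₃]
  simp only [mul_assoc]

lemma coxProd_pow_dvd {n : ℕ} (hfar : ∀ i j, i + 1 < j → Commute (s i) (s j))
    (hadj : ∀ i, i + 1 < n + 1 → s i * s (i + 1) * s i = s (i + 1) * s i * s (i + 1))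
    (i : ℕ) (h : i < n + 1) :
    ∃ u, coxProd s (n + 1) ^ (n + 2) = s i * u := by
  have h₃ := coxProd_pow_mul hfar hadj i 0 (by omega)
  rw [zero_add] at h₃
  refine ⟨coxProd s (n + 1) ^ i * coxProd (fun i => s (i + 1)) n *
    coxProd s (n + 1) ^ (n + 1 - i), ?_⟩
  rw [← mul_assoc, ← mul_assoc, ← h₃, mul_assoc (coxProd s (n + 1) ^ i), ← coxProd_succ',
    ← pow_succ, ← pow_add]
  congr 1; omega

end Central

/-! ### Embedding of the positive monoid into the braid group -/

/-- `WordEq` as a congruence on the free monoid. -/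
def wordCon (n : ℕ) : Con (FreeMonoid (Fin n)) where
  r X Y := WordEq X.toList Y.toList
  iseqv := ⟨fun _ => WordEq.refl _, fun h => h.symm, fun h h' => h.trans h'⟩
  mul' {_ x y _} h h' := (h.append_right y.toList).trans (h'.append_left x.toList)

/-- The positive braid monoid as an abstract monoid: words modulo `WordEq`. -/
abbrev PosMonoid (n : ℕ) : Type := (wordCon n).Quotient

namespace PosMonoid

variable {n : ℕ}

/-- The class of a word. -/
def mk (X : List (Fin n)) : PosMonoid n :=
  ((FreeMonoid.ofList X : FreeMonoid (Fin n)) : PosMonoid n)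

lemma mk_eq {X Y : List (Fin n)} : mk X = mk Y ↔ WordEq X Y := (wordCon n).eq

lemma mk_append (X Y : List (Fin n)) : mk (X ++ Y) = mk X * mk Y := rfl

lemma mk_cons (i : Fin n) (X : List (Fin n)) : mk (i :: X) = mk [i] * mk X := rfl

lemma mk_nil : mk ([] : List (Fin n)) = 1 := rfl

lemma exists_mk (x : PosMonoid n) : ∃ X, mk X = x := by
  induction x using Con.induction_on with
  | H w => exact ⟨w.toList, rfl⟩

lemma mul_left_cancel' {a x y : PosMonoid n} (h : a * x = a * y) : x = y := by
  obtain ⟨A, rfl⟩ := exists_mk a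
  obtain ⟨X, rfl⟩ := exists_mk x
  obtain ⟨Y, rfl⟩ := exists_mk y
  rw [← mk_append, ← mk_append, mk_eq] at h
  exact mk_eq.2 (h.append_cancel A)

lemma far {i j : Fin n} (h : Far i j) : mk [i] * mk [j] = mk [j] * mk [i] :=
  mk_eq.2 (WordEq.swap h [])

lemma adj {i j : Fin n} (h : Adj i j) :
    mk [i] * mk [j] * mk [i] = mk [j] * mk [i] * mk [j] :=
  mk_eq.2 (WordEq.braid h [])

/-- The generators, extended by `1` to all natural indices. -/
def gen (n : ℕ) (k : ℕ) : PosMonoid n := if h : k < n then mk [⟨k, h⟩] else 1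

lemma exists_central (n : ℕ) : ∃ z : PosMonoid n, ∀ i : Fin n,
    z * mk [i] = mk [i] * z ∧ ∃ u, z = mk [i] * u := by
  cases n with
  | zero => exact ⟨1, fun i => i.elim0⟩
  | succ n =>
    have hfar : ∀ i j, i + 1 < j → Commute (gen (n + 1) i) (gen (n + 1) j) := by
      intro i j h
      unfold gen
      split_ifs with h₁ h₂
      · exact far (Or.inl h)
      all_goals simp
    have hadj : ∀ i, i + 1 < n + 1 → gen (n + 1) i * gen (n + 1) (i + 1) * gen (n + 1) i =
        gen (n + 1) (i + 1) * gen (n + 1) i * gen (n + 1) (i + 1) := by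
      intro i h
      unfold gen
      rw [dif_pos h, dif_pos (by omega)]
      exact adj (Or.inl rfl)
    have hg : ∀ i : Fin (n + 1), mk [i] = gen (n + 1) i.val := by
      intro i
      rw [gen, dif_pos i.isLt]
    refine ⟨coxProd (gen (n + 1)) (n + 1) ^ (n + 2), fun i => ?_⟩
    rw [hg]
    exact ⟨coxProd_central hfar hadj i i.isLt, coxProd_pow_dvd hfar hadj i i.isLt⟩

/-- Every element divides, on the left, a central element. -/
lemma exists_mul_central (a : PosMonoid n) :
    ∃ y z : PosMonoid n, a * y = z ∧ ∀ x, z * x = x * z := by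
  obtain ⟨z, hz⟩ := exists_central n
  have hc : ∀ x, Commute z x := by
    intro x
    obtain ⟨X, rfl⟩ := exists_mk x
    induction X with
    | nil => exact Commute.one_right _
    | cons i X ih => rw [mk_cons]; exact Commute.mul_right (hz i).1 ih
  obtain ⟨A, rfl⟩ := exists_mk a
  suffices ∃ y k, mk A * y = z ^ k by
    obtain ⟨y, k, h⟩ := this
    exact ⟨y, z ^ k, h, fun x => ((hc x).pow_left k).eq⟩
  induction A with
  | nil => exact ⟨1, 0, by simp [mk_nil]⟩
  | cons i X ih =>
    obtain ⟨y, k, h⟩ := ih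
    obtain ⟨u, hu⟩ := (hz i).2
    refine ⟨y * u, k + 1, ?_⟩
    rw [mk_cons, mul_assoc, ← mul_assoc (mk X), h, ((hc u).pow_left k).eq, ← mul_assoc, ← hu,
      pow_succ']

/-- The Ore condition holds for the whole monoid, the required common multiples being central
elements. -/
noncomputable instance : OreLocalization.OreSet (⊤ : Submonoid (PosMonoid n)) := by
  have H : ∀ a : PosMonoid n, ∃ y z : PosMonoid n, y * a = z ∧ a * y = z ∧ ∀ x, z * x = x * z := by
    intro a
    obtain ⟨y, z, h, hz⟩ := exists_mul_central a
    refine ⟨y, z, mul_left_cancel' (a := a) ?_, h, hz⟩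
    rw [← mul_assoc, h, hz]
  choose y z h h' hz using H
  exact
    { ore_right_cancel := fun r₁ r₂ s e => ⟨⟨z s, trivial⟩, by
        have e' : r₁ * z s = r₂ * z s := by rw [← h' s, ← mul_assoc, e, mul_assoc]
        simpa [hz] using e'⟩
      oreNum := fun r s => r * y s
      oreDenom := fun r s => ⟨z s, trivial⟩
      ore_eq := fun r s => by rw [mul_assoc, h]; exact hz _ _ }

/-- The map from the positive monoid to the group of units of its localization. -/
noncomputable def toUnits (x : PosMonoid n) :
    (OreLocalization (⊤ : Submonoid (PosMonoid n)) (PosMonoid n))ˣ :=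
  OreLocalization.numeratorUnit ⟨x, trivial⟩

lemma toUnits_mul (x y : PosMonoid n) : toUnits (x * y) = toUnits x * toUnits y :=
  Units.ext (map_mul (OreLocalization.numeratorHom (S := (⊤ : Submonoid (PosMonoid n)))) x y)

lemma toUnits_injective {x y : PosMonoid n} (h : toUnits x = toUnits y) : x = y := by
  have h' := congrArg Units.val h
  obtain ⟨u, v, h₁, h₂⟩ := OreLocalization.oreDiv_eq_iff.1 h'
  simp only [mul_one, Submonoid.coe_one] at h₁ h₂
  have h₃ : (u : PosMonoid n) * y = v * x := h₁
  rw [← h₂] at h₃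
  exact (mul_left_cancel' h₃).symm

/-- The homomorphism from the braid group to the units of the localized positive monoid. -/
noncomputable def ofBraid (n : ℕ) :
    BraidGroup n →* (OreLocalization (⊤ : Submonoid (PosMonoid n)) (PosMonoid n))ˣ :=
  PresentedGroup.toGroup (f := fun i => toUnits (mk [i])) (by
    rintro r ⟨i, j, ⟨h, rfl⟩ | ⟨h, rfl⟩⟩
    · simp only [map_mul, map_inv, FreeGroup.lift_apply_of]
      rw [mul_inv_eq_one, ← toUnits_mul, ← toUnits_mul, far h]
    · simp only [map_mul, map_inv, FreeGroup.lift_apply_of]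
      rw [mul_inv_eq_one, ← toUnits_mul, ← toUnits_mul, ← toUnits_mul, ← toUnits_mul, adj h])

end PosMonoid

/-- The braid represented by a positive word. -/
def wordProd {n : ℕ} (X : List (Fin n)) : BraidGroup n := (X.map (σgen n)).prod

section Words

variable {n : ℕ}

@[simp] lemma wordProd_nil : wordProd ([] : List (Fin n)) = 1 := rfl

@[simp] lemma wordProd_cons (i : Fin n) (X : List (Fin n)) :
    wordProd (i :: X) = σgen n i * wordProd X := by simp [wordProd]

lemma σgen_far {i j : Fin n} (h : Far i j) : σgen n i * σgen n j = σgen n j * σgen n i := by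
  have := PresentedGroup.one_of_mem (rels := braidRels n) ⟨i, j, Or.inl ⟨h, rfl⟩⟩
  simp only [map_mul, map_inv] at this
  exact mul_inv_eq_one.1 this

lemma σgen_adj {i j : Fin n} (h : Adj i j) :
    σgen n i * σgen n j * σgen n i = σgen n j * σgen n i * σgen n j := by
  have := PresentedGroup.one_of_mem (rels := braidRels n) ⟨i, j, Or.inr ⟨h, rfl⟩⟩
  simp only [map_mul, map_inv] at this
  exact mul_inv_eq_one.1 this

lemma WordEq.wordProd_eq {X Y : List (Fin n)} (h : WordEq X Y) : wordProd X = wordProd Y := by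
  induction h with
  | nil => rfl
  | cons i _ ih => simp [ih]
  | far hf _ _ ih₁ ih₂ =>
    simp only [wordProd_cons, ih₁, ih₂, ← mul_assoc, σgen_far hf]
  | adj ha _ _ ih₁ ih₂ =>
    simp only [wordProd_cons, ih₁, ih₂, ← mul_assoc, σgen_adj ha]

lemma ofBraid_wordProd (X : List (Fin n)) :
    PosMonoid.ofBraid n (wordProd X) = PosMonoid.toUnits (PosMonoid.mk X) := by
  induction X with
  | nil =>
    rw [wordProd_nil, map_one]
    exact Units.ext (map_one (OreLocalization.numeratorHom (S := (⊤ : Submonoid (PosMonoid n))))).symm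
  | cons i X ih =>
    rw [wordProd_cons, map_mul, ih, PosMonoid.mk_cons, PosMonoid.toUnits_mul]
    congr 1
    exact PresentedGroup.toGroup.of _

/-- Garside's embedding theorem: positive words equal in the braid group are equal already in
the positive monoid. -/
lemma wordEq_of_wordProd_eq {X Y : List (Fin n)} (h : wordProd X = wordProd Y) : WordEq X Y := by
  have := congrArg (PosMonoid.ofBraid n) h
  rw [ofBraid_wordProd, ofBraid_wordProd] at this
  exact PosMonoid.mk_eq.1 (PosMonoid.toUnits_injective this)

lemma wordProd_mem (X : List (Fin n)) : wordProd X ∈ braidPos n := by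
  induction X with
  | nil => exact one_mem _
  | cons i X ih =>
    rw [wordProd_cons]
    exact mul_mem (Submonoid.subset_closure ⟨i, rfl⟩) ih

lemma exists_wordProd {x : BraidGroup n} (hx : x ∈ braidPos n) : ∃ X, wordProd X = x := by
  obtain ⟨l, hl, rfl⟩ := Submonoid.exists_list_of_mem_closure hx
  induction l with
  | nil => exact ⟨[], rfl⟩
  | cons a l ih =>
    obtain ⟨i, rfl⟩ := hl a (by simp)
    obtain ⟨X, hX⟩ := ih (fun y hy => hl y (by simp [hy]))
      (Submonoid.list_prod_mem _ fun y hy => Submonoid.subset_closure (hl y (by simp [hy])))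
    exact ⟨i :: X, by simp [hX]⟩

end Words

/-! ### Greatest common divisors -/

section Gcd

variable {n : ℕ}

lemma LDvd.trans {a b c : BraidGroup n} (h : LDvd a b) (h' : LDvd b c) : LDvd a c := by
  obtain ⟨u, hu, rfl⟩ := h
  obtain ⟨v, hv, rfl⟩ := h'
  exact ⟨u * v, mul_mem hu hv, mul_assoc _ _ _⟩

lemma LDvd.mul_left_iff {a b c : BraidGroup n} : LDvd (c * a) (c * b) ↔ LDvd a b := by
  simp only [LDvd, mul_assoc, mul_right_inj]

/-- Any two generators have a least common right multiple among positive braids. -/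
lemma exists_lcm_σgen (i j : Fin n) : ∃ m : BraidGroup n,
    LDvd (σgen n i) m ∧ LDvd (σgen n j) m ∧
      ∀ x, LDvd (σgen n i) x → LDvd (σgen n j) x → LDvd m x := by
  have mem : ∀ k, σgen n k ∈ braidPos n := fun k => Submonoid.subset_closure ⟨k, rfl⟩
  rcases eq_or_far_or_adj i j with rfl | h | h
  · exact ⟨σgen n i, ⟨1, one_mem _, by simp⟩, ⟨1, one_mem _, by simp⟩, fun x hx _ => hx⟩
  · refine ⟨σgen n i * σgen n j, ⟨_, mem j, rfl⟩, ⟨_, mem i, σgen_far h⟩, ?_⟩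
    rintro x ⟨p, hp, rfl⟩ ⟨q, hq, e⟩
    obtain ⟨P, rfl⟩ := exists_wordProd hp
    obtain ⟨Q, rfl⟩ := exists_wordProd hq
    obtain ⟨Z, hZ, -⟩ := WordEq.far_inv h (wordEq_of_wordProd_eq (X := i :: P) (Y := j :: Q)
      (by simpa using e))
    exact ⟨wordProd Z, wordProd_mem Z, by rw [hZ.wordProd_eq, wordProd_cons, mul_assoc]⟩
  · refine ⟨σgen n i * σgen n j * σgen n i, ⟨_, mul_mem (mem j) (mem i), mul_assoc _ _ _⟩,
      ⟨_, mul_mem (mem i) (mem j), by rw [σgen_adj h, mul_assoc]⟩, ?_⟩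
    rintro x ⟨p, hp, rfl⟩ ⟨q, hq, e⟩
    obtain ⟨P, rfl⟩ := exists_wordProd hp
    obtain ⟨Q, rfl⟩ := exists_wordProd hq
    obtain ⟨Z, hZ, -⟩ := WordEq.adj_inv h (wordEq_of_wordProd_eq (X := i :: P) (Y := j :: Q)
      (by simpa using e))
    exact ⟨wordProd Z, wordProd_mem Z, by
      rw [hZ.wordProd_eq, wordProd_cons, wordProd_cons, mul_assoc, mul_assoc]⟩

lemma length_of_wordProd_eq {i : Fin n} {X C : List (Fin n)} {N : ℕ} (hX : X.length = N + 1)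
    (h : wordProd X = σgen n i * wordProd C) : C.length = N := by
  have := (wordEq_of_wordProd_eq (X := X) (Y := i :: C) (by rw [h, wordProd_cons])).length_eq
  simp only [List.length_cons] at this
  omega

/-- Existence of left gcds, by induction on the length of the word `X`. If a generator `σ` divides
both braids, the gcd is `σ * g`, where `g` is the gcd of the quotients. Indeed, a nontrivial common
divisor starts with a generator `τ` dividing both braids, and so divides `τ * g'`, where `g'` is the
gcd of the quotients by `τ`; the lcm of `σ` and `τ` divides both braids, hence `τ * g'`, so that
`τ * g'` is a multiple of `σ`, and hence a divisor of `σ * g`. -/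
lemma exists_gcd_aux (N : ℕ) : ∀ (X : List (Fin n)) (B : BraidGroup n), X.length = N →
    B ∈ braidPos n → ∃ d ∈ braidPos n, LDvd d (wordProd X) ∧ LDvd d B ∧
      ∀ e ∈ braidPos n, LDvd e (wordProd X) → LDvd e B → LDvd e d := by
  induction N with
  | zero =>
    intro X B hX hB
    obtain rfl : X = [] := by simpa using hX
    exact ⟨1, one_mem _, ⟨1, one_mem _, by simp⟩, ⟨B, hB, by simp⟩, fun e _ he _ => he⟩
  | succ N ih =>
    intro X B hX hB
    by_cases hi : ∃ i, LDvd (σgen n i) (wordProd X) ∧ LDvd (σgen n i) B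
    · obtain ⟨i, hiX, hiB⟩ := hi
      obtain ⟨a, ha, hXa⟩ := hiX
      obtain ⟨b, hb, rfl⟩ := hiB
      obtain ⟨C, rfl⟩ := exists_wordProd ha
      obtain ⟨g, hg, hgC, hgb, hgmax⟩ := ih C b (length_of_wordProd_eq hX hXa) hb
      have hi_mem : σgen n i ∈ braidPos n := Submonoid.subset_closure ⟨i, rfl⟩
      refine ⟨σgen n i * g, mul_mem hi_mem hg, ?_, LDvd.mul_left_iff.2 hgb, ?_⟩
      · rw [hXa]; exact LDvd.mul_left_iff.2 hgC
      intro e he heX heB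
      obtain ⟨E, rfl⟩ := exists_wordProd he
      cases E with
      | nil => exact ⟨_, mul_mem hi_mem hg, by simp⟩
      | cons j E =>
        rw [wordProd_cons] at heX heB ⊢
        have hj : LDvd (σgen n j) (σgen n j * wordProd E) := ⟨_, wordProd_mem E, rfl⟩
        obtain ⟨a', ha', hXa'⟩ := hj.trans heX
        obtain ⟨b', hb', hBb'⟩ := hj.trans heB
        obtain ⟨C', rfl⟩ := exists_wordProd ha'
        obtain ⟨g', hg', hgC', hgb', hgmax'⟩ := ih C' b' (length_of_wordProd_eq hX hXa') hb'
        obtain ⟨m, ⟨p, hp, hmp⟩, ⟨q, hq, hmq⟩, hm⟩ := exists_lcm_σgen i j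
        have hmX : LDvd m (wordProd X) := hm _ ⟨_, ha, hXa⟩ ⟨_, ha', hXa'⟩
        have hmB : LDvd m (σgen n i * b) := hm _ ⟨_, hb, rfl⟩ ⟨_, hb', hBb'⟩
        -- `σ_j * g'` is a multiple of the lcm, hence of `σ_i`.
        have hmg' : LDvd m (σgen n j * g') := by
          rw [hmq, LDvd.mul_left_iff]
          apply hgmax' q hq
          · rwa [hmq, hXa', LDvd.mul_left_iff] at hmX
          · rwa [hmq, hBb', LDvd.mul_left_iff] at hmB
        obtain ⟨r, hr, hmr⟩ := hmg'
        rw [hmp, mul_assoc] at hmr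
        have hle : LDvd (σgen n j * g') (σgen n i * g) := by
          have h₁ : LDvd (σgen n j * g') (wordProd X) := by
            rw [hXa']; exact LDvd.mul_left_iff.2 hgC'
          have h₂ : LDvd (σgen n j * g') (σgen n i * b) := by
            rw [hBb']; exact LDvd.mul_left_iff.2 hgb'
          rw [hmr, hXa, LDvd.mul_left_iff] at h₁
          rw [hmr, LDvd.mul_left_iff] at h₂
          rw [hmr, LDvd.mul_left_iff]
          exact hgmax _ (mul_mem hp hr) h₁ h₂
        refine LDvd.trans (LDvd.mul_left_iff.2 (hgmax' _ (wordProd_mem E) ?_ ?_)) hle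
        · rwa [hXa', LDvd.mul_left_iff] at heX
        · rwa [hBb', LDvd.mul_left_iff] at heB
    · refine ⟨1, one_mem _, ⟨_, wordProd_mem X, by simp⟩, ⟨_, hB, by simp⟩, ?_⟩
      intro e he heX heB
      obtain ⟨E, rfl⟩ := exists_wordProd he
      cases E with
      | nil => exact ⟨1, one_mem _, by simp⟩
      | cons j E =>
        have hj : LDvd (σgen n j) (wordProd (j :: E)) := ⟨_, wordProd_mem E, wordProd_cons _ _⟩
        exact (hi ⟨j, hj.trans heX, hj.trans heB⟩).elim

lemma exists_gcd {A B : BraidGroup n} (hA : A ∈ braidPos n) (hB : B ∈ braidPos n) :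
    ∃ d ∈ braidPos n, LDvd d A ∧ LDvd d B ∧
      ∀ e ∈ braidPos n, LDvd e A → LDvd e B → LDvd e d := by
  obtain ⟨X, rfl⟩ := exists_wordProd hA
  exact exists_gcd_aux X.length X B rfl hB

lemma left_gcd_mul {R A B d : BraidGroup n}
    (hR : R ∈ braidPos n) (hA : A ∈ braidPos n) (hB : B ∈ braidPos n)
    (h : LDvd d A ∧ LDvd d B ∧ ∀ e ∈ braidPos n, LDvd e A → LDvd e B → LDvd e d) :
    LDvd (R * d) (R * A) ∧ LDvd (R * d) (R * B) ∧
      ∀ e ∈ braidPos n, LDvd e (R * A) → LDvd e (R * B) → LDvd e (R * d) := by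
  obtain ⟨hdA, hdB, hd⟩ := h
  refine ⟨LDvd.mul_left_iff.2 hdA, LDvd.mul_left_iff.2 hdB, fun e he heA heB => ?_⟩
  obtain ⟨D, -, hDA, hDB, hDmax⟩ := exists_gcd (mul_mem hR hA) (mul_mem hR hB)
  obtain ⟨x, hx, rfl⟩ := hDmax R hR ⟨A, hA, rfl⟩ ⟨B, hB, rfl⟩
  refine (hDmax e he heA heB).trans (LDvd.mul_left_iff.2 ?_)
  exact hd x hx (LDvd.mul_left_iff.1 hDA) (LDvd.mul_left_iff.1 hDB)

end Gcd

/-! ### Reversal of braids -/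

section Reversal

variable {n : ℕ}

/-- The anti-automorphism of the braid group fixing every generator, as a homomorphism to the
opposite group. -/
def revHom (n : ℕ) : BraidGroup n →* (BraidGroup n)ᵐᵒᵖ :=
  PresentedGroup.toGroup (f := fun i => MulOpposite.op (σgen n i)) (by
    rintro r ⟨i, j, ⟨h, rfl⟩ | ⟨h, rfl⟩⟩
    · simp only [map_mul, map_inv, FreeGroup.lift_apply_of]
      rw [mul_inv_eq_one, ← MulOpposite.op_mul, ← MulOpposite.op_mul, σgen_far h]
    · simp only [map_mul, map_inv, FreeGroup.lift_apply_of]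
      rw [mul_inv_eq_one]
      simp only [← MulOpposite.op_mul, ← mul_assoc]
      rw [σgen_adj h])

/-- The reverse of a braid. -/
def rev (x : BraidGroup n) : BraidGroup n := (revHom n x).unop

lemma rev_mul (x y : BraidGroup n) : rev (x * y) = rev y * rev x := by simp [rev]

lemma rev_σgen (i : Fin n) : rev (σgen n i) = σgen n i :=
  congrArg MulOpposite.unop (PresentedGroup.toGroup.of _)

lemma rev_mem {x : BraidGroup n} (hx : x ∈ braidPos n) : rev x ∈ braidPos n := by
  induction hx using Submonoid.closure_induction with
  | mem x h =>
    obtain ⟨i, rfl⟩ := h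
    rw [rev_σgen]
    exact Submonoid.subset_closure ⟨i, rfl⟩
  | one => simp [rev]
  | mul x y _ _ hx hy => rw [rev_mul]; exact mul_mem hy hx

lemma rev_rev {x : BraidGroup n} (hx : x ∈ braidPos n) : rev (rev x) = x := by
  induction hx using Submonoid.closure_induction with
  | mem x h =>
    obtain ⟨i, rfl⟩ := h
    rw [rev_σgen, rev_σgen]
  | one => simp [rev]
  | mul x y _ _ hx hy => rw [rev_mul, rev_mul, hx, hy]

lemma RDvd.rev {a b : BraidGroup n} (h : RDvd a b) : LDvd (rev a) (rev b) := by
  obtain ⟨c, hc, rfl⟩ := h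
  exact ⟨_, rev_mem hc, rev_mul _ _⟩

lemma LDvd.rev {a b : BraidGroup n} (h : LDvd a b) : RDvd (rev a) (rev b) := by
  obtain ⟨c, hc, rfl⟩ := h
  exact ⟨_, rev_mem hc, rev_mul _ _⟩

lemma rdvd_iff {a b : BraidGroup n} (ha : a ∈ braidPos n) (hb : b ∈ braidPos n) :
    RDvd a b ↔ LDvd (rev a) (rev b) :=
  ⟨RDvd.rev, fun h => by simpa only [rev_rev ha, rev_rev hb] using h.rev⟩

end Reversal

/-- Lemma 4: lgcd and rgcd are distributive. If `d` is a left gcd of the positive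
braids `A` and `B` then `R·d` is a left gcd of `R·A` and `R·B`; symmetrically, if `d` is a
right gcd of `A` and `B` then `d·R` is a right gcd of `A·R` and `B·R`. -/
theorem statement6 (n : ℕ) (R A B d : BraidGroup n)
    (hR : R ∈ braidPos n) (hA : A ∈ braidPos n) (hB : B ∈ braidPos n) (hd : d ∈ braidPos n) :
    ((LDvd d A ∧ LDvd d B ∧
        ∀ e ∈ braidPos n, LDvd e A → LDvd e B → LDvd e d) →
      (LDvd (R * d) (R * A) ∧ LDvd (R * d) (R * B) ∧
        ∀ e ∈ braidPos n, LDvd e (R * A) → LDvd e (R * B) → LDvd e (R * d))) ∧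
    ((RDvd d A ∧ RDvd d B ∧
        ∀ e ∈ braidPos n, RDvd e A → RDvd e B → RDvd e d) →
      (RDvd (d * R) (A * R) ∧ RDvd (d * R) (B * R) ∧
        ∀ e ∈ braidPos n, RDvd e (A * R) → RDvd e (B * R) → RDvd e (d * R))) := by
  refine ⟨left_gcd_mul hR hA hB, ?_⟩
  rintro ⟨hdA, hdB, hmax⟩
  obtain ⟨h₁, h₂, h₃⟩ := left_gcd_mul (d := rev d) (rev_mem hR) (rev_mem hA) (rev_mem hB)
    ⟨hdA.rev, hdB.rev, fun e he heA heB => by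
      rw [← rev_rev he] at heA heB ⊢
      have he' := rev_mem he
      exact (hmax _ he' ((rdvd_iff he' hA).2 heA) ((rdvd_iff he' hB).2 heB)).rev⟩
  simp only [← rev_mul] at h₁ h₂ h₃
  refine ⟨(rdvd_iff (mul_mem hd hR) (mul_mem hA hR)).2 h₁,
    (rdvd_iff (mul_mem hd hR) (mul_mem hB hR)).2 h₂, fun e he heA heB => ?_⟩
  exact (rdvd_iff he (mul_mem hd hR)).2 (h₃ _ (rev_mem he) heA.rev heB.rev)
end

section
/- (Lemma 5) Let w ∈ B_{n+1}^+ and let σ be one of the generators σ_1,…,σ_n. Define D_w^l(σ) = { X ∈ B_{n+1}^+ : there is a generator σ′ with σ w X = w X σ′ }. Then D_w^l(σ) is nonempty and contains an element d_w^l(σ) that left-divides every element of D_w^l(σ). -/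
namespace BraidAux

/-! ### The abstract braid monoid -/

/-- Indices of commuting distinct generators. -/
def Far {n : ℕ} (i j : Fin n) : Prop := i.val + 1 < j.val ∨ j.val + 1 < i.val

/-- Indices of neighbouring generators. -/
def Near {n : ℕ} (i j : Fin n) : Prop := i.val + 1 = j.val ∨ j.val + 1 = i.val

theorem Far.symm {n : ℕ} {i j : Fin n} (h : Far i j) : Far j i := Or.symm h
theorem Near.symm {n : ℕ} {i j : Fin n} (h : Near i j) : Near j i := Or.symm h

theorem eq_or_far_or_near {n : ℕ} (i j : Fin n) : i = j ∨ Far i j ∨ Near i j := by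
  unfold Far Near
  rw [Fin.ext_iff]
  omega

/-- The braid relations as relations between positive words. -/
inductive PosRel (n : ℕ) : FreeMonoid (Fin n) → FreeMonoid (Fin n) → Prop
  | far (i j : Fin n) (h : Far i j) :
      PosRel n (.of i * .of j) (.of j * .of i)
  | near (i j : Fin n) (h : Near i j) :
      PosRel n (.of i * (.of j * .of i)) (.of j * (.of i * .of j))

/-- The abstract braid monoid: the *monoid* with the braid presentation, not yet known to embed
in the braid group. -/
abbrev PosMonoid (n : ℕ) : Type := PresentedMonoid (PosRel n)

variable {n : ℕ}

/-- The class of a positive word. -/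
def cls : FreeMonoid (Fin n) →* PosMonoid n := PresentedMonoid.mk (PosRel n)

/-- The generators of the abstract braid monoid. -/
def s (i : Fin n) : PosMonoid n := PresentedMonoid.of (PosRel n) i

theorem cls_of_mul (i : Fin n) (u : FreeMonoid (Fin n)) : cls (.of i * u) = s i * cls u :=
  map_mul _ _ _

theorem comm {i j : Fin n} (h : Far i j) (x : PosMonoid n) :
    s i * (s j * x) = s j * (s i * x) := by
  have := PresentedMonoid.mk_eq_mk_of_rel (PosRel.far i j h)
  simp only [map_mul] at this
  rw [← mul_assoc, ← mul_assoc]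
  exact congrArg (· * x) this

theorem braid {i j : Fin n} (h : Near i j) (x : PosMonoid n) :
    s i * (s j * (s i * x)) = s j * (s i * (s j * x)) := by
  have := PresentedMonoid.mk_eq_mk_of_rel (PosRel.near i j h)
  simp only [map_mul] at this
  simpa only [← mul_assoc, s, PresentedMonoid.of] using congrArg (· * x) this

/-- Word length; well defined because the relations are homogeneous. -/
def lenHom (n : ℕ) : PosMonoid n →* Multiplicative ℕ :=
  PresentedMonoid.lift (fun _ => Multiplicative.ofAdd 1) (by
    rintro a b (⟨i, j, h⟩ | ⟨i, j, h⟩) <;> simp)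

/-- Word length as a natural number. -/
def len (x : PosMonoid n) : ℕ := (lenHom n x).toAdd

@[simp] theorem len_mul (x y : PosMonoid n) : len (x * y) = len x + len y := by simp [len]
@[simp] theorem len_one : len (1 : PosMonoid n) = 0 := by simp [len]
@[simp] theorem len_s (i : Fin n) : len (s i) = 1 := rfl

theorem eq_one_or_exists (x : PosMonoid n) : x = 1 ∨ ∃ i y, x = s i * y := by
  obtain ⟨u, rfl⟩ := PresentedMonoid.surjective_mk x
  induction u using FreeMonoid.casesOn with
  | one => exact Or.inl (map_one _)
  | of_mul i u => exact Or.inr ⟨i, cls u, cls_of_mul i u⟩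

theorem eq_one_of_len {x : PosMonoid n} (h : len x = 0) : x = 1 := by
  rcases eq_one_or_exists x with h1 | ⟨i, y, rfl⟩
  · exact h1
  · simp at h

theorem exists_of_len_one {x : PosMonoid n} (h : len x = 1) : ∃ i, x = s i := by
  rcases eq_one_or_exists x with rfl | ⟨i, y, rfl⟩
  · simp at h
  · have hy : len y = 0 := by simpa using h
    exact ⟨i, by rw [eq_one_of_len hy, mul_one]⟩

/-! ### Garside's lemma and left cancellation -/

/-- The obvious reason for `s i * a = s j * b`: either `i = j` and `a = b`, or both sides are a
common right multiple of the least common multiple of `s i` and `s j`. -/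
def Meet (i : Fin n) (a : PosMonoid n) (j : Fin n) (b : PosMonoid n) : Prop :=
  (i = j ∧ a = b) ∨ (Far i j ∧ ∃ z, a = s j * z ∧ b = s i * z) ∨
    (Near i j ∧ ∃ z, a = s j * (s i * z) ∧ b = s i * (s j * z))

theorem Meet.symm {i j : Fin n} {a b : PosMonoid n} (h : Meet i a j b) : Meet j b i a := by
  rcases h with ⟨rfl, rfl⟩ | ⟨h, z, ha, hb⟩ | ⟨h, z, ha, hb⟩
  · exact Or.inl ⟨rfl, rfl⟩
  · exact Or.inr (Or.inl ⟨h.symm, z, hb, ha⟩)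
  · exact Or.inr (Or.inr ⟨h.symm, z, hb, ha⟩)

theorem Meet.mul_right {i j : Fin n} {a b : PosMonoid n} (h : Meet i a j b) (y : PosMonoid n) :
    Meet i (a * y) j (b * y) := by
  rcases h with ⟨rfl, rfl⟩ | ⟨h, z, rfl, rfl⟩ | ⟨h, z, rfl, rfl⟩
  · exact Or.inl ⟨rfl, rfl⟩
  · exact Or.inr (Or.inl ⟨h, z * y, by simp only [mul_assoc], by simp only [mul_assoc]⟩)
  · exact Or.inr (Or.inr ⟨h, z * y, by simp only [mul_assoc], by simp only [mul_assoc]⟩)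

/-- Garside's lemma for tails of length less than `L`. -/
def GarsideBelow (n L : ℕ) : Prop :=
  ∀ (i j : Fin n) (a b : PosMonoid n), len a < L → s i * a = s j * b → Meet i a j b

theorem Near.ne {i j : Fin n} (h : Near i j) : i ≠ j := by
  rintro rfl; unfold Near at h; omega

theorem Far.ne {i j : Fin n} (h : Far i j) : i ≠ j := by
  rintro rfl; unfold Far at h; omega

theorem Far.not_near {i j : Fin n} (h : Far i j) : ¬ Near i j := by
  unfold Far Near at *; omega

namespace GarsideBelow

variable {L : ℕ} {i j : Fin n} {a b : PosMonoid n}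

theorem cancel (K : GarsideBelow n L) (ha : len a < L) (h : s i * a = s i * b) : a = b := by
  rcases K i i a b ha h with h | h | h
  · exact h.2
  · exact absurd rfl h.1.ne
  · exact absurd rfl h.1.ne

theorem far (K : GarsideBelow n L) (ha : len a < L) (hf : Far i j) (h : s i * a = s j * b) :
    ∃ z, a = s j * z ∧ b = s i * z := by
  rcases K i j a b ha h with h | h | h
  · exact absurd h.1 hf.ne
  · exact h.2
  · exact absurd h.1 hf.not_near

theorem near (K : GarsideBelow n L) (ha : len a < L) (hf : Near i j) (h : s i * a = s j * b) :
    ∃ z, a = s j * (s i * z) ∧ b = s i * (s j * z) := by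
  rcases K i j a b ha h with h | h | h
  · exact absurd h.1 hf.ne
  · exact absurd hf h.1.not_near
  · exact h.2

/-- The case of `meet_trans` in which the first step is a commutation and the second a braid
relation. -/
theorem meet_trans_far_near (K : GarsideBelow n L) {k : Fin n} {z z' : PosMonoid n}
    (hik : Far i k) (hkj : Near k j) (hl : len z < L) (h : s i * z = s j * (s k * z')) :
    Meet i (s k * z) j (s k * (s j * z')) := by
  rcases eq_or_far_or_near i j with rfl | hij | hij
  · exact absurd hkj.symm hik.not_near
  · obtain ⟨y, rfl, h2⟩ := K.far hl hij h
    obtain ⟨x, rfl, rfl⟩ := K.far (by have := congrArg len h; simp at *; omega) hik.symm h2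
    refine Or.inr (Or.inl ⟨hij, s k * (s j * x), ?_, ?_⟩)
    · rw [braid hkj]
    · rw [← comm hij, ← comm hik]
  · obtain ⟨y, rfl, h2⟩ := K.near hl hij h
    obtain ⟨x, rfl, h3⟩ := K.far (by have := congrArg len h; simp at *; omega) hik.symm h2
    obtain ⟨t, rfl, rfl⟩ := K.near (by simp at *; omega) hkj.symm h3
    refine Or.inr (Or.inr ⟨hij, s k * (s j * (s i * t)), ?_, ?_⟩)
    · conv_lhs => rw [comm hik, braid hkj, braid hij.symm, comm hik.symm]
    · conv_lhs => rw [← braid hij, comm hik.symm, comm hik t, braid hkj]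

/-- Transitivity of `Meet`: this is the heart of Garside's lemma. The three generators involved
span a rank three parabolic submonoid, and each case is a computation in it. -/
theorem meet_trans (K : GarsideBelow n L) {k : Fin n} {c : PosMonoid n} (hc : len c ≤ L)
    (h1 : Meet i a k c) (h2 : Meet k c j b) : Meet i a j b := by
  rcases h1 with ⟨rfl, rfl⟩ | ⟨hik, z, rfl, rfl⟩ | ⟨hik, z, rfl, rfl⟩
  · exact h2
  · rcases h2 with ⟨rfl, rfl⟩ | ⟨hkj, z', hz, rfl⟩ | ⟨hkj, z', hz, rfl⟩
    · exact Or.inr (Or.inl ⟨hik, z, rfl, rfl⟩)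
    · have hl : len z < L := by simp at hc; omega
      rcases eq_or_far_or_near i j with rfl | hij | hij
      · exact Or.inl ⟨rfl, by rw [K.cancel hl hz]⟩
      · obtain ⟨y, rfl, rfl⟩ := K.far hl hij hz
        exact Or.inr (Or.inl ⟨hij, s k * y, comm hkj y, comm hik.symm y⟩)
      · obtain ⟨y, rfl, rfl⟩ := K.near hl hij hz
        refine Or.inr (Or.inr ⟨hij, s k * y, ?_, ?_⟩)
        · rw [comm hkj, comm hik.symm]
        · rw [comm hik.symm, comm hkj]
    · exact K.meet_trans_far_near hik hkj (by simp at hc; omega) hz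
  · have hl : len (s k * z) < L := by simp at hc ⊢; omega
    rcases h2 with ⟨rfl, rfl⟩ | ⟨hkj, z', hz, rfl⟩ | ⟨hkj, z', hz, rfl⟩
    · exact Or.inr (Or.inr ⟨hik, z, rfl, rfl⟩)
    · refine (K.meet_trans_far_near hkj.symm hik.symm ?_ hz.symm).symm
      have := congrArg len hz; simp at *; omega
    · have e := congrArg len hz
      rcases eq_or_far_or_near i j with rfl | hij | hij
      · have h3 := K.cancel hl hz
        exact Or.inl ⟨rfl, by rw [K.cancel (by simp at hl; omega) h3]⟩
      · obtain ⟨y, h3, h4⟩ := K.far hl hij hz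
        obtain ⟨x, rfl, h5⟩ := K.near (by simp at hl; omega) hkj h3
        obtain ⟨x', rfl, h6⟩ := K.near (by simp at *; omega) hik.symm h4
        have h7 := K.cancel (by simp at *; omega) (h5.symm.trans h6)
        obtain ⟨t, rfl, rfl⟩ := K.far (by simp at *; omega) hij.symm h7
        refine Or.inr (Or.inl ⟨hij, s k * (s j * (s i * (s k * t))), ?_, ?_⟩)
        · conv_lhs => rw [comm hij, ← braid hik.symm, braid hkj]
        · conv_lhs => rw [comm hij.symm, braid hkj.symm, braid hik.symm, comm hij]
      · unfold Near at *; omega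

end GarsideBelow

/-- Inductive step of Garside's lemma: two equivalent words of length at most `L + 1` are both
empty, or have first letters and tails related by `Meet`. -/
theorem GarsideBelow.of_rel {L : ℕ} (K : GarsideBelow n L) {W W' : FreeMonoid (Fin n)}
    (h : ConGen.Rel (PosRel n) W W') (hl : len (cls W) ≤ L + 1) :
    (W = 1 ∧ W' = 1) ∨
      ∃ i u j v, W = .of i * u ∧ W' = .of j * v ∧ Meet i (cls u) j (cls v) := by
  have key : ∀ {U V}, ConGen.Rel (PosRel n) U V → cls U = cls V :=
    fun h => PresentedMonoid.mk_eq_mk_iff.2 h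
  induction h with
  | of x y h =>
    right
    rcases h with ⟨i, j, h⟩ | ⟨i, j, h⟩
    · exact ⟨i, _, j, _, rfl, rfl, Or.inr (Or.inl ⟨h, 1, (mul_one _).symm, (mul_one _).symm⟩)⟩
    · refine ⟨i, _, j, _, rfl, rfl, Or.inr (Or.inr ⟨h, 1, ?_, ?_⟩)⟩ <;>
      rw [mul_one, map_mul] <;> rfl
  | refl x =>
    induction x using FreeMonoid.casesOn with
    | one => exact Or.inl ⟨rfl, rfl⟩
    | of_mul i u => exact Or.inr ⟨i, u, i, u, rfl, rfl, Or.inl ⟨rfl, rfl⟩⟩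
  | symm h ih =>
    rcases ih (by rwa [key h]) with ⟨h1, h2⟩ | ⟨i, u, j, v, h1, h2, h3⟩
    · exact Or.inl ⟨h2, h1⟩
    · exact Or.inr ⟨j, v, i, u, h2, h1, h3.symm⟩
  | trans h h' ih ih' =>
    have hl' := hl
    rw [key h] at hl'
    rcases ih hl with ⟨h1, h2⟩ | ⟨i, u, k, c, h1, h2, h3⟩ <;>
    rcases ih' hl' with ⟨h4, h5⟩ | ⟨k', c', j, v, h4, h5, h6⟩
    · exact Or.inl ⟨h1, h5⟩
    · simpa using congrArg FreeMonoid.toList (h2.symm.trans h4)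
    · simpa using congrArg FreeMonoid.toList (h2.symm.trans h4)
    · obtain ⟨rfl, hc⟩ : k = k' ∧ c.toList = c'.toList := by
        simpa using congrArg FreeMonoid.toList (h2.symm.trans h4)
      obtain rfl : c = c' := hc
      rw [h2, cls_of_mul] at hl'
      exact Or.inr ⟨i, u, j, v, h1, h5,
        K.meet_trans (by simp at hl'; omega) h3 h6⟩
  | mul h h' ih ih' =>
    have e := key h'
    rw [map_mul, len_mul] at hl
    rcases ih (by omega) with ⟨rfl, rfl⟩ | ⟨i, u, j, v, rfl, rfl, h3⟩
    · simpa using ih' (by omega)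
    · refine Or.inr ⟨i, _, j, _, mul_assoc _ _ _, mul_assoc _ _ _, ?_⟩
      rw [map_mul, map_mul, e]
      exact h3.mul_right _

/-- Garside's lemma, in all lengths: by induction, from `GarsideBelow.of_rel`. -/
theorem garside {i j : Fin n} {a b : PosMonoid n} (h : s i * a = s j * b) : Meet i a j b := by
  suffices H : ∀ L, GarsideBelow n L from H (len a + 1) i j a b (Nat.lt_succ_self _) h
  intro L
  induction L with
  | zero => intro i j a b ha; omega
  | succ L K =>
    intro i j a b ha h
    obtain ⟨u, rfl⟩ : ∃ u, cls u = a := PresentedMonoid.surjective_mk a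
    obtain ⟨v, rfl⟩ : ∃ v, cls v = b := PresentedMonoid.surjective_mk b
    have hl : len (cls (.of i * u)) ≤ L + 1 := by rw [cls_of_mul]; simp; omega
    rw [← cls_of_mul, ← cls_of_mul] at h
    rcases K.of_rel (PresentedMonoid.mk_eq_mk_iff.1 h) hl with ⟨h1, -⟩ | ⟨i', u', j', v', h1, h2, h3⟩
    · simpa using congrArg FreeMonoid.toList h1
    · obtain ⟨rfl, hu⟩ : i = i' ∧ u.toList = u'.toList := by
        simpa using congrArg FreeMonoid.toList h1
      obtain ⟨rfl, hv⟩ : j = j' ∧ v.toList = v'.toList := by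
        simpa using congrArg FreeMonoid.toList h2
      obtain rfl : u = u' := hu
      obtain rfl : v = v' := hv
      exact h3

theorem s_cancel {i : Fin n} {a b : PosMonoid n} (h : s i * a = s i * b) : a = b :=
  GarsideBelow.cancel (L := len a + 1) (fun _ _ _ _ _ h => garside h) (Nat.lt_succ_self _) h

theorem left_cancel (x : PosMonoid n) {a b : PosMonoid n} (h : x * a = x * b) : a = b := by
  induction hx : len x generalizing x with
  | zero => simpa [eq_one_of_len hx] using h
  | succ L ih =>
    rcases eq_one_or_exists x with rfl | ⟨i, y, rfl⟩
    · simpa using h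
    · rw [mul_assoc, mul_assoc] at h
      exact ih y (s_cancel h) (by simp at hx; omega)

instance : IsLeftCancelMul (PosMonoid n) := ⟨fun x _ _ h => left_cancel x h⟩

/-! ### Least common multiples and greatest common divisors

Here `a ∣ b` means that `a` divides `b` on the left. -/

theorem len_le_of_dvd {a b : PosMonoid n} (h : a ∣ b) : len a ≤ len b := by
  obtain ⟨c, rfl⟩ := h
  simp

theorem eq_of_dvd_of_len {a b : PosMonoid n} (h : a ∣ b) (hl : len b ≤ len a) : a = b := by
  obtain ⟨c, rfl⟩ := h
  rw [eq_one_of_len (x := c) (by simp at hl; omega), mul_one]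

theorem dvd_of_mul_dvd {x a b : PosMonoid n} (h : x * a ∣ x * b) : a ∣ b := by
  obtain ⟨c, hc⟩ := h
  exact ⟨c, left_cancel x (by rw [hc, mul_assoc])⟩

/-- Two generators with a common right multiple have a least one. -/
theorem exists_lcm_s {i j : Fin n} {x : PosMonoid n} (hi : s i ∣ x) (hj : s j ∣ x) :
    ∃ p q, s i * p = s j * q ∧ s i * p ∣ x ∧ ∀ y, s i ∣ y → s j ∣ y → s i * p ∣ y := by
  have key : ∀ y, s i ∣ y → s j ∣ y → ∃ a b, y = s i * a ∧ Meet i a j b := by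
    rintro y ⟨a, rfl⟩ ⟨b, hb⟩
    exact ⟨a, b, rfl, garside hb⟩
  suffices H : ∃ p q, s i * p = s j * q ∧ ∀ y, s i ∣ y → s j ∣ y → s i * p ∣ y by
    obtain ⟨p, q, h, H⟩ := H
    exact ⟨p, q, h, H x hi hj, H⟩
  rcases eq_or_far_or_near i j with rfl | hij | hij
  · exact ⟨1, 1, rfl, fun y hy _ => by simpa using hy⟩
  · refine ⟨s j, s i, by simpa using comm hij 1, fun y h1 h2 => ?_⟩
    obtain ⟨a, b, rfl, h | ⟨-, z, rfl, -⟩ | h⟩ := key y h1 h2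
    · exact absurd h.1 hij.ne
    · exact ⟨z, by rw [mul_assoc]⟩
    · exact absurd h.1 hij.not_near
  · refine ⟨s j * s i, s i * s j, by simpa using braid hij 1, fun y h1 h2 => ?_⟩
    obtain ⟨a, b, rfl, h | h | ⟨-, z, rfl, -⟩⟩ := key y h1 h2
    · exact absurd h.1 hij.ne
    · exact absurd hij h.1.not_near
    · exact ⟨z, by simp only [mul_assoc]⟩

/-- Two elements with a common right multiple have a least one. Induction on the length of the
common multiple `x`: if `g = s i * g'` and `h = s j * h'`, the least common multiple `m` of the
two generators divides `x`, and the least common multiple of `g` and `h` is obtained from those of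
`g` and `m`, of `h` and `m`, and of the two results. -/
theorem exists_lcm {x g h : PosMonoid n} (hg : g ∣ x) (hh : h ∣ x) :
    ∃ l, g ∣ l ∧ h ∣ l ∧ l ∣ x ∧ ∀ y, g ∣ y → h ∣ y → l ∣ y := by
  induction hL : len x using Nat.strong_induction_on generalizing x g h with
  | _ L ih =>
    subst hL
    rcases eq_one_or_exists g with rfl | ⟨i, g', rfl⟩
    · exact ⟨h, one_dvd _, dvd_rfl, hh, fun _ _ h => h⟩
    rcases eq_one_or_exists h with rfl | ⟨j, h', rfl⟩
    · exact ⟨_, dvd_rfl, one_dvd _, hg, fun _ h _ => h⟩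
    obtain ⟨p, q, hpq, ⟨y, rfl⟩, hm⟩ :=
      exists_lcm_s ((Dvd.intro _ rfl).trans hg) ((Dvd.intro _ rfl).trans hh)
    have e := congrArg len hpq
    have hg1 : g' ∣ p * y := dvd_of_mul_dvd (x := s i) (by rwa [← mul_assoc])
    have hh1 : h' ∣ q * y := dvd_of_mul_dvd (x := s j) (by rwa [← mul_assoc, ← hpq])
    obtain ⟨l₁, a1, ⟨v, rfl⟩, c1, d1⟩ := ih _ (by simp) hg1 (Dvd.intro _ rfl : p ∣ p * y) rfl
    obtain ⟨l₂, a2, ⟨v', rfl⟩, c2, d2⟩ :=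
      ih _ (by simp at *; omega) hh1 (Dvd.intro _ rfl : q ∣ q * y) rfl
    obtain ⟨l, a3, b3, c3, d3⟩ :=
      ih _ (by simp) (dvd_of_mul_dvd c1) (dvd_of_mul_dvd c2) rfl
    refine ⟨s i * p * l, ?_, ?_, mul_dvd_mul_left _ c3, fun z h1 h2 => ?_⟩
    · rw [mul_assoc]
      exact mul_dvd_mul_left _ (a1.trans (mul_dvd_mul_left _ a3))
    · rw [hpq, mul_assoc]
      exact mul_dvd_mul_left _ (a2.trans (mul_dvd_mul_left _ b3))
    · obtain ⟨t, rfl⟩ := hm z ((Dvd.intro _ rfl).trans h1) ((Dvd.intro _ rfl).trans h2)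
      refine mul_dvd_mul_left _ (d3 _ ?_ ?_)
      · refine dvd_of_mul_dvd (d1 (p * t) (dvd_of_mul_dvd (x := s i) ?_) (Dvd.intro _ rfl))
        rwa [← mul_assoc]
      · refine dvd_of_mul_dvd (d2 (q * t) (dvd_of_mul_dvd (x := s j) ?_) (Dvd.intro _ rfl))
        rwa [← mul_assoc, ← hpq]

theorem exists_gcd (x y : PosMonoid n) :
    ∃ g, g ∣ x ∧ g ∣ y ∧ ∀ h, h ∣ x → h ∣ y → h ∣ g := by
  -- A common divisor of maximal length absorbs its least common multiple with any other one.
  obtain ⟨g, ⟨hx, hy⟩, hmax⟩ : ∃ g, (g ∣ x ∧ g ∣ y) ∧ ∀ h, h ∣ x ∧ h ∣ y → len h ≤ len g := by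
    by_contra! H
    have : ∀ k, ∃ g, (g ∣ x ∧ g ∣ y) ∧ k ≤ len g := by
      intro k
      induction k with
      | zero => exact ⟨1, ⟨one_dvd _, one_dvd _⟩, Nat.zero_le _⟩
      | succ k ih =>
        obtain ⟨g, hg, hk⟩ := ih
        obtain ⟨h, hh, hlt⟩ := H g hg
        exact ⟨h, hh, by omega⟩
    obtain ⟨g, hg, hk⟩ := this (len x + 1)
    have := len_le_of_dvd hg.1
    omega
  refine ⟨g, hx, hy, fun h h1 h2 => ?_⟩
  obtain ⟨l, hgl, hhl, hlx, hl⟩ := exists_lcm hx h1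
  rw [eq_of_dvd_of_len hgl (hmax l ⟨hlx, hl y hy h2⟩)]
  exact hhl

/-! ### A central element divisible by every generator -/

/-- `s k` with a natural number index, and `1` outside the range. -/
def t (n k : ℕ) : PosMonoid n := if h : k < n then s ⟨k, h⟩ else 1

/-- The product of the first `m` generators. -/
def pr (n : ℕ) : ℕ → PosMonoid n
  | 0 => 1
  | m + 1 => pr n m * t n m

/-- The product of the `m` generators following the first one. -/
def tl (n : ℕ) : ℕ → PosMonoid n
  | 0 => 1
  | m + 1 => tl n m * t n (m + 1)

theorem t_far {j k : ℕ} (h : j + 1 < k) : t n j * t n k = t n k * t n j := by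
  unfold t
  split_ifs with h1 h2
  · simpa using comm (n := n) (i := ⟨j, h1⟩) (j := ⟨k, h2⟩) (Or.inl h) 1
  all_goals simp

theorem t_braid {j : ℕ} (h : j + 1 < n) :
    t n j * t n (j + 1) * t n j = t n (j + 1) * t n j * t n (j + 1) := by
  unfold t
  rw [dif_pos h, dif_pos (show j < n by omega)]
  simpa [mul_assoc] using
    braid (n := n) (i := ⟨j, by omega⟩) (j := ⟨j + 1, h⟩) (Or.inl rfl) 1

theorem pr_comm {m k : ℕ} (h : m < k) : pr n m * t n k = t n k * pr n m := by
  induction m with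
  | zero => simp [pr]
  | succ m ih =>
    rw [pr, mul_assoc, t_far (by omega), ← mul_assoc, ih (by omega), mul_assoc]

theorem pr_shift {m k : ℕ} (h : k + 2 ≤ m) (hm : m ≤ n) :
    pr n m * t n k = t n (k + 1) * pr n m := by
  induction m, h using Nat.le_induction with
  | base =>
    calc pr n (k + 2) * t n k = pr n k * (t n k * t n (k + 1) * t n k) := by
          simp only [pr, mul_assoc]
      _ = pr n k * t n (k + 1) * (t n k * t n (k + 1)) := by
          rw [t_braid (by omega)]; simp only [mul_assoc]
      _ = t n (k + 1) * pr n (k + 2) := by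
          rw [pr_comm (by omega)]; simp only [pr, mul_assoc]
  | succ m hk ih =>
    rw [pr, mul_assoc, ← t_far (by omega), ← mul_assoc, ih (by omega), mul_assoc]

theorem pr_succ (m : ℕ) : pr n (m + 1) = t n 0 * tl n m := by
  induction m with
  | zero => simp [pr, tl]
  | succ m ih => rw [pr, ih, tl, mul_assoc]

theorem pr_mul_pr {m : ℕ} (hm : m + 1 ≤ n) : pr n n * pr n m = tl n m * pr n n := by
  induction m with
  | zero => simp [pr, tl]
  | succ m ih =>
    rw [pr, ← mul_assoc, ih (by omega), mul_assoc, pr_shift (by omega) le_rfl, tl, mul_assoc]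

/-- Conjugation by `c = pr n n` shifts the generators (`pr_shift`), and `c ^ 2` carries the last
one to the first: with `c = a * t N = t 0 * b`, shifting gives `c * a = b * c`, whence
`c ^ 2 * t N = t 0 * (b * c) * t N = t 0 * c ^ 2`. -/
theorem pr_sq {N : ℕ} (hN : n = N + 1) : pr n n ^ 2 * t n N = t n 0 * pr n n ^ 2 := by
  have h1 : pr n n = pr n N * t n N := by subst hN; rfl
  have h2 : pr n n = t n 0 * tl n N := by rw [← pr_succ, ← hN]
  have h3 := pr_mul_pr (n := n) (m := N) (by omega)
  calc pr n n ^ 2 * t n N = t n 0 * (tl n N * pr n n) * t n N := by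
        rw [sq]; nth_rw 1 [h2]; simp only [mul_assoc]
    _ = t n 0 * (pr n n * (pr n N * t n N)) := by rw [← h3]; simp only [mul_assoc]
    _ = t n 0 * pr n n ^ 2 := by rw [← h1, sq]

theorem pr_pow {k j : ℕ} (h : j + k < n) : pr n n ^ k * t n j = t n (j + k) * pr n n ^ k := by
  induction k with
  | zero => simp
  | succ k ih =>
    rw [pow_succ', mul_assoc, ih (by omega), ← mul_assoc, pr_shift (by omega) le_rfl, mul_assoc]
    rfl

/-- The full twist `(σ_1 ⋯ σ_n) ^ (n + 1)`. -/
def twist (n : ℕ) : PosMonoid n := pr n n ^ (n + 1)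

theorem t_eq (i : Fin n) : t n i = s i := by simp [t]

theorem twist_s (i : Fin n) : twist n * s i = s i * twist n := by
  obtain ⟨N, hN⟩ : ∃ N, n = N + 1 := ⟨n - 1, by have := i.2; omega⟩
  have hi := i.2
  rw [← t_eq]
  have e : n + 1 = i + (2 + (N - i)) := by omega
  have h1 := pr_pow (n := n) (k := N - i) (j := i) (by omega)
  have h2 := pr_pow (n := n) (k := i) (j := 0) (by omega)
  rw [show (i : ℕ) + (N - i) = N by omega] at h1
  rw [zero_add] at h2
  rw [twist, e, pow_add, pow_add, mul_assoc, mul_assoc, h1, ← mul_assoc (_ ^ 2), pr_sq hN,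
    mul_assoc (t n 0), ← mul_assoc, h2, mul_assoc]

theorem twist_comm (x : PosMonoid n) : Commute (twist n) x := by
  induction hx : len x generalizing x with
  | zero => rw [eq_one_of_len hx]; exact Commute.one_right _
  | succ L ih =>
    rcases eq_one_or_exists x with rfl | ⟨i, y, rfl⟩
    · exact Commute.one_right _
    · exact Commute.mul_right (twist_s i) (ih y (by simp at hx; omega))

theorem s_dvd_twist (i : Fin n) : s i ∣ twist n := by
  have hi := i.2
  have h2 := pr_pow (n := n) (k := i) (j := 0) (by omega)
  rw [zero_add, t_eq] at h2
  obtain ⟨N, hN⟩ : ∃ N, n = N + 1 := ⟨n - 1, by omega⟩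
  have h3 : pr n n = t n 0 * tl n N := by rw [← pr_succ, ← hN]
  rw [twist, show n + 1 = i + (1 + (n - i)) by omega, pow_add, pow_add, pow_one]
  nth_rw 2 [h3]
  rw [mul_assoc (t n 0), ← mul_assoc, h2, mul_assoc]
  exact Dvd.intro _ rfl

theorem dvd_twist_pow (w : PosMonoid n) : ∃ k, w ∣ twist n ^ k := by
  induction hw : len w generalizing w with
  | zero => exact ⟨0, by rw [eq_one_of_len hw]; exact one_dvd _⟩
  | succ L ih =>
    rcases eq_one_or_exists w with rfl | ⟨i, y, rfl⟩
    · exact ⟨0, one_dvd _⟩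
    · obtain ⟨k, z, hz⟩ := ih y (by simp at hw; omega)
      obtain ⟨q, hq⟩ := s_dvd_twist i
      refine ⟨k + 1, z * q, ?_⟩
      calc twist n ^ (k + 1) = twist n ^ k * s i * q := by rw [pow_succ, hq, mul_assoc]
        _ = s i * (y * z) * q := by rw [((twist_comm (s i)).pow_left k).eq, hz]
        _ = s i * y * (z * q) := by simp only [mul_assoc]

/-! ### The statement in the abstract monoid -/

/-- The set of the theorem, computed in the abstract monoid. -/
def D (w : PosMonoid n) (i : Fin n) : Set (PosMonoid n) :=
  {X | ∃ j, s i * w * X = w * X * s j}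

theorem D_nonempty (w : PosMonoid n) (i : Fin n) : (D w i).Nonempty := by
  obtain ⟨k, X, hX⟩ := dvd_twist_pow w
  exact ⟨X, i, by rw [mul_assoc, ← hX, ((twist_comm (s i)).pow_left k).eq]⟩

/-- Membership in `D` only asks for a divisibility, since an element of length one is a
generator. -/
theorem mem_D_iff {w X : PosMonoid n} {i : Fin n} : X ∈ D w i ↔ w * X ∣ s i * w * X := by
  constructor
  · rintro ⟨j, hj⟩
    exact ⟨s j, hj⟩
  · rintro ⟨r, hr⟩
    obtain ⟨j, rfl⟩ := exists_of_len_one (x := r) (by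
      have := congrArg len hr
      simp at this
      omega)
    exact ⟨j, hr⟩

/-- If `w d` is the greatest common divisor of `w X` and `w Y`, then `σ_i w d` is that of
`σ_i w X` and `σ_i w Y`, of which `w d` is a common divisor; so `d` lies in `D w i`. -/
theorem exists_gcd_mem_D {w X Y : PosMonoid n} {i : Fin n} (hX : X ∈ D w i) (hY : Y ∈ D w i) :
    ∃ d ∈ D w i, d ∣ X ∧ d ∣ Y := by
  rw [mem_D_iff] at hX hY
  obtain ⟨g, hgX, hgY, hg⟩ := exists_gcd (w * X) (w * Y)
  obtain ⟨d, rfl⟩ := hg w (Dvd.intro _ rfl) (Dvd.intro _ rfl)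
  obtain ⟨g', hgX', hgY', hg'⟩ := exists_gcd (s i * w * X) (s i * w * Y)
  obtain ⟨e, rfl⟩ := hg' (s i * w) (Dvd.intro _ rfl) (Dvd.intro _ rfl)
  refine ⟨d, mem_D_iff.2 ?_, dvd_of_mul_dvd hgX, dvd_of_mul_dvd hgY⟩
  have hed : e ∣ d := dvd_of_mul_dvd (hg (w * e) (mul_dvd_mul_left _ (dvd_of_mul_dvd hgX'))
    (mul_dvd_mul_left _ (dvd_of_mul_dvd hgY')))
  exact (hg' (w * d) (hgX.trans hX) (hgY.trans hY)).trans (mul_dvd_mul_left _ hed)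

theorem exists_least_D (w : PosMonoid n) (i : Fin n) : ∃ d ∈ D w i, ∀ X ∈ D w i, d ∣ X := by
  obtain ⟨d, hd, hmin⟩ := WellFounded.has_min (measure (len (n := n))).wf _ (D_nonempty w i)
  refine ⟨d, hd, fun X hX => ?_⟩
  obtain ⟨d', hd', h1, h2⟩ := exists_gcd_mem_D hd hX
  rwa [← eq_of_dvd_of_len h1 (not_lt.1 (hmin d' hd'))]

/-! ### Embedding of the abstract monoid in the braid group -/

/-- The canonical map from the abstract braid monoid to the braid group. -/
def toBraid (n : ℕ) : PosMonoid n →* BraidGroup n :=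
  PresentedMonoid.lift (σgen n) (by
    rintro a b (⟨i, j, h⟩ | ⟨i, j, h⟩)
    · have := PresentedGroup.one_of_mem (rels := braidRels n) ⟨i, j, Or.inl ⟨h, rfl⟩⟩
      rw [map_mul, map_inv, mul_inv_eq_one, map_mul, map_mul] at this
      exact this
    · have := PresentedGroup.one_of_mem (rels := braidRels n) ⟨i, j, Or.inr ⟨h, rfl⟩⟩
      rw [map_mul, map_inv, mul_inv_eq_one] at this
      simp only [map_mul, mul_assoc] at this
      exact this)

theorem toBraid_s (i : Fin n) : toBraid n (s i) = σgen n i := rfl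

/-- The powers of the full twist form an Ore set because they are central. -/
instance : OreLocalization.OreSet (Submonoid.powers (twist n)) where
  ore_right_cancel := by
    rintro r₁ r₂ ⟨_, k, rfl⟩ h
    refine ⟨⟨_, k, rfl⟩, ?_⟩
    simpa only [((twist_comm _).pow_left k).eq] using h
  oreNum r _ := r
  oreDenom _ x := x
  ore_eq := by
    rintro r ⟨_, k, rfl⟩
    exact ((twist_comm r).pow_left k).eq

/-- The localization of the abstract monoid at the powers of the full twist. -/
abbrev Loc (n : ℕ) : Type := OreLocalization (Submonoid.powers (twist n)) (PosMonoid n)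

/-- The localization map. -/
def toLoc (n : ℕ) : PosMonoid n →* Loc n := OreLocalization.numeratorHom

theorem toLoc_injective : Function.Injective (toLoc n) := by
  intro a b h
  obtain ⟨u, v, h1, h2⟩ := OreLocalization.oreDiv_eq_iff.1 h
  simp only [OneMemClass.coe_one, mul_one] at h2
  simp only [Submonoid.smul_def, smul_eq_mul] at h1
  rw [h2] at h1
  exact (left_cancel v h1).symm

theorem isUnit_toLoc_s (i : Fin n) : IsUnit (toLoc n (s i)) := by
  obtain ⟨q, hq⟩ := s_dvd_twist i
  -- `s i * (q * s i) = twist * s i = s i * twist`, so `q` is also a left complement.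
  have hq' : q * s i = twist n :=
    s_cancel (i := i) (by rw [← mul_assoc, ← hq, (twist_comm (s i)).eq])
  obtain ⟨u, hu⟩ : IsUnit (toLoc n (twist n)) :=
    OreLocalization.numerator_isUnit (⟨_, Submonoid.mem_powers _⟩ : Submonoid.powers (twist n))
  refine isUnit_iff_exists_and_exists.2 ⟨⟨toLoc n q * ↑u⁻¹, ?_⟩, ⟨↑u⁻¹ * toLoc n q, ?_⟩⟩
  · rw [← mul_assoc, ← map_mul, ← hq, ← hu, Units.mul_inv]
  · rw [mul_assoc, ← map_mul, hq', ← hu, Units.inv_mul]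

/-- The map from the braid group to the units of the localization, extending `toLoc`. -/
noncomputable def braidToLoc (n : ℕ) : BraidGroup n →* (Loc n)ˣ :=
  PresentedGroup.toGroup (f := fun i => (isUnit_toLoc_s i).unit) (by
    rintro r ⟨i, j, ⟨h, rfl⟩ | ⟨h, rfl⟩⟩
    · rw [map_mul, map_inv, mul_inv_eq_one]
      ext
      have := congrArg (toLoc n) (comm h 1)
      simp only [map_mul, mul_one] at this
      simpa only [map_mul, FreeGroup.lift_apply_of, Units.val_mul, IsUnit.unit_spec] using this
    · rw [map_mul, map_inv, mul_inv_eq_one]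
      ext
      have := congrArg (toLoc n) (braid h 1)
      simp only [map_mul, mul_one] at this
      simpa only [map_mul, FreeGroup.lift_apply_of, Units.val_mul, IsUnit.unit_spec,
        mul_assoc] using this)

theorem toBraid_injective : Function.Injective (toBraid n) := by
  have h : ((Units.coeHom _).comp (braidToLoc n)).comp (toBraid n) = toLoc n := by
    refine PresentedMonoid.ext _ fun i => ?_
    change ((braidToLoc n (σgen n i) : (Loc n)ˣ) : Loc n) = toLoc n (s i)
    rw [braidToLoc, σgen, PresentedGroup.toGroup.of]
    rfl
  refine Function.Injective.of_comp (f := (Units.coeHom _).comp (braidToLoc n)) ?_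
  rw [← MonoidHom.coe_comp, h]
  exact toLoc_injective

theorem mem_braidPos_iff {x : BraidGroup n} : x ∈ braidPos n ↔ ∃ y, toBraid n y = x := by
  have : MonoidHom.mrange (toBraid n) = braidPos n := by
    rw [MonoidHom.mrange_eq_map, ← PresentedMonoid.closure_range_of, MonoidHom.map_mclosure,
      ← Set.range_comp]
    rfl
  rw [← this, MonoidHom.mem_mrange]

end BraidAux

open BraidAux

/-- Lemma 5: for a positive braid `w` and a generator `σ_i`, the set
`D_w^l(σ_i) = {X ∈ B⁺ : σ_i w X = w X σ' for some generator σ'}` is nonempty and contains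
an element that left-divides every element of the set. -/
theorem statement7 (n : ℕ) (w : BraidGroup n) (hw : w ∈ braidPos n) (i : Fin n) :
    ∃ d, (d ∈ braidPos n ∧ ∃ i' : Fin n, σgen n i * w * d = w * d * σgen n i') ∧
      ∀ X, (X ∈ braidPos n ∧ ∃ i'' : Fin n, σgen n i * w * X = w * X * σgen n i'') →
        LDvd d X := by
  obtain ⟨w, rfl⟩ := mem_braidPos_iff.1 hw
  obtain ⟨d, ⟨j, hj⟩, hd⟩ := exists_least_D w i
  refine ⟨toBraid n d, ⟨mem_braidPos_iff.2 ⟨d, rfl⟩, j, ?_⟩, ?_⟩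
  · simpa only [map_mul, toBraid_s] using congrArg (toBraid n) hj
  · rintro _ ⟨hX, k, hk⟩
    obtain ⟨X, rfl⟩ := mem_braidPos_iff.1 hX
    simp only [← toBraid_s, ← map_mul] at hk
    obtain ⟨c, rfl⟩ := hd X ⟨k, toBraid_injective hk⟩
    exact ⟨toBraid n c, mem_braidPos_iff.2 ⟨c, rfl⟩, map_mul _ _ _⟩
end

section
/- (Lemma 6) Let w ∈ B_{n+1}^+, let σ be a generator, and let d = d_w^l(σ) be the minimal positive braid with σ w d = w d σ′ for a generator σ′ (minimal in the sense that d left-divides every X ∈ B_{n+1}^+ for which σ w X = w X σ″ for some generator σ″). If f, h ∈ B_{n+1}^+ satisfy σ w f = w h, then d left-divides f, d σ′ left-divides h, and writing f = d x with x ∈ B_{n+1}^+ one has h = d σ′ x. -/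
/-! ### The presented braid monoid -/

namespace PosBraid

/-- The generators indexed by `i` and `j` are distinct and commute. -/
def Far {n : ℕ} (i j : Fin n) : Prop := i.val + 1 < j.val ∨ j.val + 1 < i.val
/-- The generators indexed by `i` and `j` satisfy the braid relation `iji = jij`. -/
def Adj {n : ℕ} (i j : Fin n) : Prop := i.val + 1 = j.val ∨ j.val + 1 = i.val

theorem Far.symm {n : ℕ} {i j : Fin n} (h : Far i j) : Far j i := Or.symm h
theorem Adj.symm {n : ℕ} {i j : Fin n} (h : Adj i j) : Adj j i := Or.symm h

theorem eq_or_far_or_adj {n : ℕ} (i j : Fin n) : i = j ∨ Far i j ∨ Adj i j := by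
  unfold Far Adj; rw [Fin.ext_iff]; omega

/-- Equivalence of positive words under the braid relations. Only the tail rule `cons` is needed for
a congruence, since the relations are stated with an arbitrary tail `u`; symmetry is derived. -/
inductive BEq {n : ℕ} : List (Fin n) → List (Fin n) → Prop
  | refl (u : List (Fin n)) : BEq u u
  | cons (i : Fin n) {u v : List (Fin n)} : BEq u v → BEq (i :: u) (i :: v)
  | far {i j : Fin n} (h : Far i j) (u : List (Fin n)) : BEq (i :: j :: u) (j :: i :: u)
  | adj {i j : Fin n} (h : Adj i j) (u : List (Fin n)) :
      BEq (i :: j :: i :: u) (j :: i :: j :: u)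
  | trans {u v w : List (Fin n)} : BEq u v → BEq v w → BEq u w

namespace BEq
variable {n : ℕ}

theorem symm {u v : List (Fin n)} (h : BEq u v) : BEq v u := by
  induction h with
  | refl u => exact refl u
  | cons i _ ih => exact cons i ih
  | far h u => exact far h.symm u
  | adj h u => exact adj h.symm u
  | trans _ _ ih₁ ih₂ => exact ih₂.trans ih₁

theorem length_eq {u v : List (Fin n)} (h : BEq u v) : u.length = v.length := by
  induction h with
  | trans _ _ ih₁ ih₂ => exact ih₁.trans ih₂
  | _ => simp_all

theorem append_left (w : List (Fin n)) {u v : List (Fin n)} (h : BEq u v) :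
    BEq (w ++ u) (w ++ v) := by
  induction w with
  | nil => exact h
  | cons i w ih => exact cons i ih

theorem append_right {u v : List (Fin n)} (h : BEq u v) (w : List (Fin n)) :
    BEq (u ++ w) (v ++ w) := by
  induction h with
  | refl u => exact refl _
  | cons i _ ih => exact cons i ih
  | far h u => exact far h _
  | adj h u => exact adj h _
  | trans _ _ ih₁ ih₂ => exact ih₁.trans ih₂

theorem reverse {u v : List (Fin n)} (h : BEq u v) : BEq u.reverse v.reverse := by
  induction h with
  | refl u => exact refl _
  | cons i _ ih => simpa using ih.append_right [i]
  | @far i j h u => simpa using (far h.symm []).append_left u.reverse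
  | @adj i j h u => simpa using (adj h []).append_left u.reverse
  | trans _ _ ih₁ ih₂ => exact ih₁.trans ih₂

end BEq

/-- The congruence on the free monoid whose quotient is the presented braid monoid. -/
def braidCon (n : ℕ) : Con (FreeMonoid (Fin n)) where
  r u v := BEq u.toList v.toList
  iseqv := ⟨fun _ => .refl _, .symm, .trans⟩
  mul' h₁ h₂ := by
    simpa using (h₁.append_right _).trans (h₂.append_left _)

/-- The monoid with the braid presentation on `n` generators. Its identification with the submonoid
`braidPos n` of the braid group is `toBraid_injective` and `mem_braidPos_iff`. -/
abbrev Mon (n : ℕ) : Type := (braidCon n).Quotient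

variable {n : ℕ}

/-- The class of a positive word. -/
def mk (u : List (Fin n)) : Mon n := (FreeMonoid.ofList u : FreeMonoid (Fin n))

/-- The generator `σ_{i+1}` of the presented monoid. -/
def s (i : Fin n) : Mon n := mk [i]

theorem mk_eq {u v : List (Fin n)} : mk u = mk v ↔ BEq u v := (braidCon n).eq

theorem mk_append (u v : List (Fin n)) : mk (u ++ v) = mk u * mk v := rfl

theorem mk_cons (i : Fin n) (u : List (Fin n)) : mk (i :: u) = s i * mk u := rfl

theorem mk_nil : mk ([] : List (Fin n)) = 1 := rfl

theorem exists_mk (a : Mon n) : ∃ u, mk u = a := by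
  obtain ⟨u, rfl⟩ := (braidCon n).mk'_surjective a
  exact ⟨u.toList, rfl⟩

theorem far_mul {i j : Fin n} (h : Far i j) (x : Mon n) : s i * (s j * x) = s j * (s i * x) := by
  obtain ⟨u, rfl⟩ := exists_mk x
  exact mk_eq.2 (.far h u)

theorem adj_mul {i j : Fin n} (h : Adj i j) (x : Mon n) :
    s i * (s j * (s i * x)) = s j * (s i * (s j * x)) := by
  obtain ⟨u, rfl⟩ := exists_mk x
  exact mk_eq.2 (.adj h u)

/-- Word length, which the braid relations preserve. -/
def len (a : Mon n) : ℕ := Con.liftOn a (fun u => u.toList.length) fun _ _ h => h.length_eq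

theorem len_mk (u : List (Fin n)) : len (mk u) = u.length := rfl

theorem len_mul (a b : Mon n) : len (a * b) = len a + len b := by
  obtain ⟨u, rfl⟩ := exists_mk a
  obtain ⟨v, rfl⟩ := exists_mk b
  rw [← mk_append, len_mk, len_mk, len_mk, List.length_append]

theorem len_s (i : Fin n) : len (s i) = 1 := rfl

theorem len_one : len (1 : Mon n) = 0 := rfl

/-- The anti-automorphism reversing words. -/
def rev (a : Mon n) : Mon n :=
  Con.liftOn a (fun u => mk u.toList.reverse) fun _ _ h => mk_eq.2 h.reverse

theorem rev_mk (u : List (Fin n)) : rev (mk u) = mk u.reverse := rfl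

theorem rev_mul (a b : Mon n) : rev (a * b) = rev b * rev a := by
  obtain ⟨u, rfl⟩ := exists_mk a
  obtain ⟨v, rfl⟩ := exists_mk b
  rw [← mk_append, rev_mk, rev_mk, rev_mk, List.reverse_append, mk_append]

theorem rev_rev (a : Mon n) : rev (rev a) = a := by
  obtain ⟨u, rfl⟩ := exists_mk a
  rw [rev_mk, rev_mk, List.reverse_reverse]

theorem rev_s (i : Fin n) : rev (s i) = s i := rfl

theorem eq_one_or_s_mul (a : Mon n) : a = 1 ∨ ∃ i b, a = s i * b := by
  obtain ⟨_ | ⟨i, u⟩, rfl⟩ := exists_mk a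
  · exact .inl rfl
  · exact .inr ⟨i, mk u, rfl⟩

theorem mon_induction {p : Mon n → Prop} (one : p 1) (mul : ∀ i a, p a → p (s i * a)) (a : Mon n) :
    p a := by
  obtain ⟨u, rfl⟩ := exists_mk a
  induction u with
  | nil => exact one
  | cons i u ih => exact mul i _ ih

theorem mon_induction_right {p : Mon n → Prop} (one : p 1) (mul : ∀ i a, p a → p (a * s i))
    (a : Mon n) : p a := by
  rw [← rev_rev a]
  induction rev a using mon_induction with
  | one => exact one
  | mul i b ih => rw [rev_mul, rev_s]; exact mul i _ ih

/-! ### Common multiples of two generators, and cancellation -/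

/-- `σ_i u = σ_j v` for the evident reason: both sides are the right multiple by one `k` of the least
common multiple of `σ_i` and `σ_j`. -/
def Residue (i j : Fin n) (u v : Mon n) : Prop :=
  ∃ k, (i = j ∧ u = k ∧ v = k) ∨ (Far i j ∧ u = s j * k ∧ v = s i * k) ∨
    (Adj i j ∧ u = s j * (s i * k) ∧ v = s i * (s j * k))

theorem Residue.symm {i j : Fin n} {u v : Mon n} : Residue i j u v → Residue j i v u := by
  rintro ⟨k, ⟨h, h₁, h₂⟩ | ⟨h, h₁, h₂⟩ | ⟨h, h₁, h₂⟩⟩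
  · exact ⟨k, .inl ⟨h.symm, h₂, h₁⟩⟩
  · exact ⟨k, .inr (.inl ⟨h.symm, h₂, h₁⟩)⟩
  · exact ⟨k, .inr (.inr ⟨h.symm, h₂, h₁⟩)⟩

theorem Residue.eq {i : Fin n} {u v : Mon n} : Residue i i u v → u = v := by
  rintro ⟨k, ⟨-, h₁, h₂⟩ | ⟨h, -, -⟩ | ⟨h, -, -⟩⟩
  · rw [h₁, h₂]
  · unfold Far at h; omega
  · unfold Adj at h; omega

theorem Residue.far {i j : Fin n} {u v : Mon n} (hij : Far i j) :
    Residue i j u v → ∃ k, u = s j * k ∧ v = s i * k := by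
  rintro ⟨k, ⟨h, -, -⟩ | ⟨-, h⟩ | ⟨h, -, -⟩⟩
  · subst h; unfold Far at hij; omega
  · exact ⟨k, h⟩
  · unfold Adj at h; unfold Far at hij; omega

theorem Residue.adj {i j : Fin n} {u v : Mon n} (hij : Adj i j) :
    Residue i j u v → ∃ k, u = s j * (s i * k) ∧ v = s i * (s j * k) := by
  rintro ⟨k, ⟨h, -, -⟩ | ⟨h, -, -⟩ | ⟨-, h⟩⟩
  · subst h; unfold Adj at hij; omega
  · unfold Far at h; unfold Adj at hij; omega
  · exact ⟨k, h⟩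

/-- Garside's theorem on common multiples of two generators, for cofactors of length below `L`. -/
def HUpTo (n L : ℕ) : Prop :=
  ∀ (i j : Fin n) (u v : Mon n), len u < L → s i * u = s j * v → Residue i j u v

/-- The case of `Residue.trans` in which `i` commutes with `m` and `m` is braided with `j`. The two
conclusions about the middle element `x` are compared by means of `hL`, applied to shorter words. -/
theorem Residue.trans_far_adj {L : ℕ} (hL : HUpTo n L) {i m j : Fin n} {u x v : Mon n}
    (hx : len x ≤ L) (him : Far i m) (hmj : Adj m j)
    (h₁ : ∃ k, u = s m * k ∧ x = s i * k) (h₂ : ∃ k, x = s j * (s m * k) ∧ v = s m * (s j * k)) :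
    Residue i j u v := by
  obtain ⟨p, rfl, rfl⟩ := h₁
  obtain ⟨q, hq, rfl⟩ := h₂
  have hl := congrArg len hq
  simp only [len_mul, len_s] at hx hl
  have h := hL i j _ _ (by omega) hq
  rcases eq_or_far_or_adj i j with rfl | hij | hij
  · unfold Far at him; unfold Adj at hmj; omega
  · obtain ⟨k, rfl, hk⟩ := h.far hij
    obtain ⟨k', rfl, rfl⟩ := (hL m i _ _ (by omega) hk).far him.symm
    refine ⟨s m * (s j * k'), .inr (.inl ⟨hij, ?_, ?_⟩)⟩
    · rw [adj_mul hmj]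
    · rw [far_mul hij.symm, far_mul him.symm]
  · obtain ⟨k, rfl, hk⟩ := h.adj hij
    obtain ⟨k', rfl, hk'⟩ := (hL m i _ _ (by omega) hk).far him.symm
    simp only [len_mul, len_s] at hl hx
    obtain ⟨k'', rfl, rfl⟩ := (hL j m _ _ (by omega) hk').adj hmj.symm
    refine ⟨s m * (s j * (s i * k'')), .inr (.inr ⟨hij, ?_, ?_⟩)⟩
    · rw [far_mul him, adj_mul hmj, adj_mul hij.symm, far_mul him.symm]
    · rw [← adj_mul hij, far_mul him.symm, far_mul him k'', adj_mul hmj]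

/-- Transitivity of `Residue` in the middle index, granted the theorem for shorter words: this is the
verification of all configurations of three generators. -/
theorem Residue.trans {L : ℕ} (hL : HUpTo n L) {i m j : Fin n} {u x v : Mon n} (hx : len x ≤ L)
    (h₁ : Residue i m u x) (h₂ : Residue m j x v) : Residue i j u v := by
  rcases eq_or_far_or_adj i m with rfl | him | him
  · rwa [h₁.eq]
  · rcases eq_or_far_or_adj m j with rfl | hmj | hmj
    · rwa [← h₂.eq]
    · obtain ⟨p, rfl, rfl⟩ := h₁.far him
      obtain ⟨q, hq, rfl⟩ := h₂.far hmj
      simp only [len_mul, len_s] at hx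
      obtain ⟨k, ⟨rfl, rfl, rfl⟩ | ⟨h, rfl, rfl⟩ | ⟨h, rfl, rfl⟩⟩ := hL i j _ _ (by omega) hq
      · exact ⟨_, .inl ⟨rfl, rfl, rfl⟩⟩
      · exact ⟨s m * k, .inr (.inl ⟨h, far_mul hmj _, far_mul him.symm _⟩)⟩
      · exact ⟨s m * k, .inr (.inr ⟨h, by rw [far_mul hmj, far_mul him],
          by rw [far_mul him.symm, far_mul hmj]⟩)⟩
    · exact trans_far_adj hL hx him hmj (h₁.far him) (h₂.adj hmj)
  · rcases eq_or_far_or_adj m j with rfl | hmj | hmj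
    · rwa [← h₂.eq]
    · refine (trans_far_adj hL hx hmj.symm him.symm ?_ ?_).symm
      · exact h₂.symm.far hmj.symm
      · exact h₁.symm.adj him.symm
    · obtain ⟨p, rfl, rfl⟩ := h₁.adj him
      obtain ⟨q, hq, rfl⟩ := h₂.adj hmj
      simp only [len_mul, len_s] at hx
      have h := hL i j _ _ (by rw [len_mul, len_s]; omega) hq
      rcases eq_or_far_or_adj i j with rfl | hij | hij
      · have := (hL m m _ _ (by omega) h.eq).eq
        exact ⟨_, .inl ⟨rfl, by rw [this], rfl⟩⟩
      · obtain ⟨k, hk₁, hk₂⟩ := h.far hij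
        have hl := congrArg len hq
        simp only [len_mul, len_s] at hl
        obtain ⟨k₁, rfl, rfl⟩ := (hL m j _ _ (by omega) hk₁).adj hmj
        obtain ⟨k₂, rfl, hk⟩ := (hL m i _ _ (by omega) hk₂).adj him.symm
        simp only [len_mul, len_s] at hl hx
        have hk := (hL m m _ _ (by simp only [len_mul, len_s]; omega) hk).eq
        obtain ⟨k₃, rfl, rfl⟩ := (hL j i _ _ (by omega) hk).far hij.symm
        refine ⟨s m * (s j * (s i * (s m * k₃))), .inr (.inl ⟨hij, ?_, ?_⟩)⟩
        · rw [far_mul hij, adj_mul him, adj_mul hmj]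
        · rw [far_mul hij.symm, adj_mul hmj.symm, adj_mul him.symm, far_mul hij.symm]
      · unfold Adj at him hmj hij; omega

/-- Outer induction on the length, inner induction on a derivation of the word equivalence; only
the transitivity step of the latter needs the shorter lengths, through `Residue.trans`. -/
theorem hUpTo (L : ℕ) : HUpTo n L := by
  induction L with
  | zero => intro i j u v h; omega
  | succ L hL =>
    have key : ∀ a b : List (Fin n), BEq a b → a.length ≤ L + 1 → ∀ i j u v,
        a = i :: u → b = j :: v → Residue i j (mk u) (mk v) := by
      intro a b hab
      induction hab with
      | refl u =>
        rintro - i j u v rfl h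
        obtain ⟨rfl, rfl⟩ := List.cons.inj h
        exact ⟨_, .inl ⟨rfl, rfl, rfl⟩⟩
      | cons m huv _ =>
        rintro - i j u v h₁ h₂
        obtain ⟨rfl, rfl⟩ := List.cons.inj h₁
        obtain ⟨rfl, rfl⟩ := List.cons.inj h₂
        exact ⟨_, .inl ⟨rfl, rfl, (mk_eq.2 huv).symm⟩⟩
      | far h w =>
        rintro - i j u v h₁ h₂
        obtain ⟨rfl, rfl⟩ := List.cons.inj h₁
        obtain ⟨rfl, rfl⟩ := List.cons.inj h₂
        exact ⟨mk w, .inr (.inl ⟨h, rfl, rfl⟩)⟩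
      | adj h w =>
        rintro - i j u v h₁ h₂
        obtain ⟨rfl, rfl⟩ := List.cons.inj h₁
        obtain ⟨rfl, rfl⟩ := List.cons.inj h₂
        exact ⟨mk w, .inr (.inr ⟨h, rfl, rfl⟩)⟩
      | @trans a c b hac hcb ih₁ ih₂ =>
        rintro hl i j u v rfl rfl
        have hlc := hac.length_eq
        rcases c with _ | ⟨m, x⟩
        · simp at hlc
        · have hx : (m :: x).length ≤ L + 1 := by omega
          refine Residue.trans hL (x := mk x) ?_ (ih₁ hl i m u x rfl rfl) (ih₂ hx m j x v rfl rfl)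
          simpa [len_mk] using hx
    intro i j u v hl h
    obtain ⟨u, rfl⟩ := exists_mk u
    obtain ⟨v, rfl⟩ := exists_mk v
    rw [len_mk] at hl
    exact key _ _ (mk_eq.1 h) (by simpa using by omega) i j u v rfl rfl

/-- Garside's theorem: every common right multiple of two generators comes from their lcm. -/
theorem s_mul_eq_s_mul {i j : Fin n} {u v : Mon n} (h : s i * u = s j * v) : Residue i j u v :=
  hUpTo (len u + 1) i j u v (by omega) h

theorem mul_left_cancel' {a u v : Mon n} (h : a * u = a * v) : u = v := by
  induction a using mon_induction with
  | one => simpa using h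
  | mul i a ih => exact ih (s_mul_eq_s_mul (by simpa only [mul_assoc] using h)).eq

theorem mul_right_cancel' {a u v : Mon n} (h : u * a = v * a) : u = v := by
  have := congrArg rev h
  rw [rev_mul, rev_mul] at this
  rw [← rev_rev u, mul_left_cancel' this, rev_rev]

instance : CancelMonoid (Mon n) :=
  { (inferInstance : Monoid (Mon n)) with
    mul_left_cancel := fun _ _ _ h => mul_left_cancel' h
    mul_right_cancel := fun _ _ _ h => mul_right_cancel' h }

/-! ### Permutations and simple braids -/

open Equiv (Perm)

/-- The adjacent transposition `(i, i+1)`. -/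
def t (i : Fin n) : Perm (Fin (n + 1)) := Equiv.swap i.castSucc i.succ

theorem t_val (i : Fin n) (x : Fin (n + 1)) :
    (t i x).val = if x.val = i.val then i.val + 1 else if x.val = i.val + 1 then i.val else x.val := by
  unfold t
  rw [Equiv.swap_apply_def]
  simp only [Fin.ext_iff, Fin.val_castSucc, Fin.val_succ]
  split_ifs <;> rfl

theorem t_mul_self (i : Fin n) : t i * t i = 1 := Equiv.swap_mul_self _ _

theorem t_inv (i : Fin n) : (t i)⁻¹ = t i := Equiv.swap_inv _ _

theorem t_far {i j : Fin n} (h : Far i j) : t i * t j = t j * t i := by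
  ext x
  simp only [Equiv.Perm.mul_apply, t_val]
  unfold Far at h
  split_ifs <;> omega

theorem t_adj {i j : Fin n} (h : Adj i j) : t i * (t j * t i) = t j * (t i * t j) := by
  have key : ∀ {i j : Fin n}, i.val + 1 = j.val → t i * (t j * t i) = t j * (t i * t j) := by
    intro i j h
    have h₁ : j.castSucc = i.succ := by simpa [Fin.ext_iff] using h.symm
    have h₂ : i.castSucc ≠ i.succ := by simp [Fin.ext_iff]
    have h₃ : i.castSucc ≠ j.succ := by simp [Fin.ext_iff]; omega
    have h₄ : i.succ ≠ j.succ := by simp [Fin.ext_iff]; omega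
    unfold t
    rw [h₁, ← mul_assoc, ← mul_assoc, Equiv.swap_mul_swap_mul_swap h₂ h₃,
      Equiv.swap_comm i.castSucc i.succ, Equiv.swap_comm i.succ j.succ,
      Equiv.swap_mul_swap_mul_swap h₄.symm h₃.symm, Equiv.swap_comm]
  rcases h with h | h
  · exact key h
  · exact (key h).symm

theorem BEq.prod_eq {G : Type*} [Monoid G] {f : Fin n → G}
    (hf : ∀ i j, Far i j → f i * f j = f j * f i)
    (ha : ∀ i j, Adj i j → f i * (f j * f i) = f j * (f i * f j))
    {u v : List (Fin n)} (h : BEq u v) : (u.map f).prod = (v.map f).prod := by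
  induction h with
  | refl u => rfl
  | cons i _ ih => simp [ih]
  | far h u => simp [← mul_assoc, hf _ _ h]
  | adj h u => simpa [mul_assoc] using congrArg (· * (u.map f).prod) (ha _ _ h)
  | trans _ _ ih₁ ih₂ => exact ih₁.trans ih₂

/-- The universal property of the presented monoid. -/
def liftHom {G : Type*} [Monoid G] (f : Fin n → G)
    (hf : ∀ i j, Far i j → f i * f j = f j * f i)
    (ha : ∀ i j, Adj i j → f i * (f j * f i) = f j * (f i * f j)) : Mon n →* G :=
  (braidCon n).lift (FreeMonoid.lift f) fun u v h => by
    rw [Con.ker_rel, FreeMonoid.lift_apply, FreeMonoid.lift_apply]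
    exact BEq.prod_eq hf ha h

theorem liftHom_s {G : Type*} [Monoid G] (f : Fin n → G) (hf) (ha) (i : Fin n) :
    liftHom f hf ha (s i) = f i := by
  change (braidCon n).lift (FreeMonoid.lift f) _ ((FreeMonoid.of i : FreeMonoid (Fin n)) :
    (braidCon n).Quotient) = _
  rw [Con.lift_coe, FreeMonoid.lift_eval_of]

/-- The permutation of the strands of a positive braid. -/
def π : Mon n →* Perm (Fin (n + 1)) := liftHom t (fun _ _ => t_far) (fun _ _ => t_adj)

theorem π_s (i : Fin n) : π (s i) = t i := liftHom_s _ _ _ i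

theorem π_rev (a : Mon n) : π (rev a) = (π a)⁻¹ := by
  induction a using mon_induction with
  | one => rw [map_one, inv_one]; exact map_one π
  | mul i a ih => rw [rev_mul, map_mul, map_mul, ih, mul_inv_rev, rev_s, π_s, t_inv]

/-- The inversions of a permutation. -/
def invSet (p : Perm (Fin (n + 1))) : Finset (Fin (n + 1) × Fin (n + 1)) :=
  Finset.univ.filter fun x => x.1 < x.2 ∧ p x.2 < p x.1

theorem mem_invSet {p : Perm (Fin (n + 1))} {x y : Fin (n + 1)} :
    (x, y) ∈ invSet p ↔ x < y ∧ p y < p x := by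
  simp [invSet]

/-- The number of inversions of a permutation. -/
def invCount (p : Perm (Fin (n + 1))) : ℕ := (invSet p).card

/-- `i` is a left descent of `p`: the product `t i * p` has fewer inversions than `p`. -/
def Desc (i : Fin n) (p : Perm (Fin (n + 1))) : Prop := p⁻¹ i.succ < p⁻¹ i.castSucc

theorem desc_t_mul (i : Fin n) (p : Perm (Fin (n + 1))) : Desc i (t i * p) ↔ ¬ Desc i p := by
  have hne : p⁻¹ i.succ ≠ p⁻¹ i.castSucc := fun h => by
    have := p⁻¹.injective h
    simp [Fin.ext_iff] at this
  unfold Desc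
  rw [mul_inv_rev, t_inv, Equiv.Perm.mul_apply, Equiv.Perm.mul_apply]
  simp only [t, Equiv.swap_apply_left, Equiv.swap_apply_right, not_lt]
  exact ⟨le_of_lt, fun h => lt_of_le_of_ne h hne.symm⟩

theorem invCount_t_mul {i : Fin n} {p : Perm (Fin (n + 1))} (h : ¬ Desc i p) :
    invCount (t i * p) = invCount p + 1 := by
  have hlt : p⁻¹ i.castSucc < p⁻¹ i.succ := by
    refine lt_of_le_of_ne (not_lt.1 h) fun h => ?_
    have := p⁻¹.injective h
    simp [Fin.ext_iff] at this
  have hp : ∀ x, p (p⁻¹ x) = x := fun x => p.apply_symm_apply x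
  have hset : invSet (t i * p) = insert (p⁻¹ i.castSucc, p⁻¹ i.succ) (invSet p) := by
    ext ⟨x, y⟩
    obtain ⟨x, rfl⟩ := p⁻¹.surjective x
    obtain ⟨y, rfl⟩ := p⁻¹.surjective y
    simp only [mem_invSet, Finset.mem_insert,
      Prod.mk.injEq, Equiv.Perm.mul_apply, hp, EmbeddingLike.apply_eq_iff_eq]
    by_cases hxy : x = i.castSucc ∧ y = i.succ
    · obtain ⟨rfl, rfl⟩ := hxy
      simp only [hlt, t, Equiv.swap_apply_left, Equiv.swap_apply_right]
      simp
    · by_cases hxy' : x = i.succ ∧ y = i.castSucc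
      · obtain ⟨rfl, rfl⟩ := hxy'
        simp only [not_lt.2 hlt.le, false_and, or_false]
        simp [Fin.ext_iff]
      · simp only [hxy, false_or]
        refine and_congr_right fun hlt' => ?_
        rw [Fin.lt_def, Fin.lt_def, t_val, t_val]
        simp only [Fin.ext_iff, Fin.val_castSucc, Fin.val_succ] at hxy hxy'
        split_ifs <;> omega
  rw [invCount, hset, Finset.card_insert_of_notMem, invCount]
  simp only [mem_invSet, hp, not_and, not_lt]
  exact fun _ => i.castSucc_lt_succ.le

theorem invCount_t_mul' {i : Fin n} {p : Perm (Fin (n + 1))} (h : Desc i p) :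
    invCount (t i * p) + 1 = invCount p := by
  have h' : ¬ Desc i (t i * p) := by rw [desc_t_mul]; exact not_not.2 h
  rw [← invCount_t_mul h', ← mul_assoc, t_mul_self, one_mul]

theorem invCount_t_mul_le (i : Fin n) (p : Perm (Fin (n + 1))) : invCount (t i * p) ≤ invCount p + 1 := by
  by_cases h : Desc i p
  · have := invCount_t_mul' h; omega
  · exact (invCount_t_mul h).le

theorem invCount_one : invCount (1 : Perm (Fin (n + 1))) = 0 := by
  rw [invCount, Finset.card_eq_zero, invSet, Finset.filter_eq_empty_iff]
  rintro x - ⟨h₁, h₂⟩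
  exact lt_asymm h₁ h₂

theorem invCount_inv (p : Perm (Fin (n + 1))) : invCount p⁻¹ = invCount p := by
  refine Finset.card_bij' (fun x _ => (p⁻¹ x.2, p⁻¹ x.1)) (fun x _ => (p x.2, p x.1)) ?_ ?_ ?_ ?_ <;>
    simp +contextual [invSet]

theorem invCount_π_mul_le (a b : Mon n) : invCount (π (a * b)) ≤ len a + invCount (π b) := by
  induction a using mon_induction with
  | one => rw [one_mul, len_one, zero_add]
  | mul i a ih =>
    have := invCount_t_mul_le i (π (a * b))
    rw [mul_assoc, map_mul, π_s, len_mul, len_s]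
    omega

theorem invCount_π_le (a : Mon n) : invCount (π a) ≤ len a := by
  simpa [invCount_one] using invCount_π_mul_le a 1

/-- A positive braid is simple if no two of its strands cross twice, i.e. if its length is the number
of inversions of its permutation. -/
def Simple (a : Mon n) : Prop := invCount (π a) = len a

theorem len_rev (a : Mon n) : len (rev a) = len a := by
  obtain ⟨u, rfl⟩ := exists_mk a
  rw [rev_mk, len_mk, len_mk, List.length_reverse]

theorem simple_rev {a : Mon n} : Simple (rev a) ↔ Simple a := by
  rw [Simple, π_rev, invCount_inv, len_rev, Simple]

theorem Simple.right {a b : Mon n} (h : Simple (a * b)) : Simple b := by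
  have h₁ := invCount_π_mul_le a b
  have h₂ := invCount_π_le b
  rw [Simple, len_mul] at h
  rw [Simple]; omega

theorem Simple.left {a b : Mon n} (h : Simple (a * b)) : Simple a := by
  rw [← simple_rev, rev_mul] at h
  exact simple_rev.1 h.right

theorem Simple.of_dvd {a b : Mon n} (h : Simple b) (hab : a ∣ b) : Simple a := by
  obtain ⟨c, rfl⟩ := hab
  exact h.left

theorem simple_one : Simple (1 : Mon n) := by
  rw [Simple, map_one, invCount_one, len_one]

theorem simple_s_mul_iff {i : Fin n} {a : Mon n} :
    Simple (s i * a) ↔ Simple a ∧ ¬ Desc i (π a) := by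
  constructor
  · intro h
    refine ⟨h.right, fun hd => ?_⟩
    have h₁ := invCount_t_mul' hd
    have h₂ := h.right
    rw [Simple, map_mul, π_s, len_mul, len_s] at h
    rw [Simple] at h₂
    omega
  · rintro ⟨h, hd⟩
    rw [Simple, map_mul, π_s, len_mul, len_s, invCount_t_mul hd, h, add_comm]

theorem Simple.desc {i : Fin n} {a : Mon n} (h : Simple (s i * a)) : Desc i (π (s i * a)) := by
  rw [map_mul, π_s, desc_t_mul]
  exact (simple_s_mul_iff.1 h).2

theorem eq_one_of_len {a : Mon n} (h : len a = 0) : a = 1 := by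
  obtain ⟨u, rfl⟩ := exists_mk a
  rw [len_mk, List.length_eq_zero_iff] at h
  rw [h, mk_nil]

theorem not_desc_one (i : Fin n) : ¬ Desc i 1 := by
  simp [Desc, Fin.lt_def]

theorem desc_far {i j : Fin n} (h : Far i j) {p : Perm (Fin (n + 1))} :
    Desc i (t j * p) ↔ Desc i p := by
  have h₁ : t j i.succ = i.succ := by
    rw [Fin.ext_iff, t_val, Fin.val_succ]; unfold Far at h; split_ifs <;> omega
  have h₂ : t j i.castSucc = i.castSucc := by
    rw [Fin.ext_iff, t_val, Fin.val_castSucc]; unfold Far at h; split_ifs <;> omega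
  unfold Desc
  rw [mul_inv_rev, t_inv, Equiv.Perm.mul_apply, Equiv.Perm.mul_apply, h₁, h₂]

/-- If `i` and `j` are both left descents, the permutation reverses three consecutive values, so it
still has the descents `i`, `j` one after the other once `t j` has been removed. -/
theorem desc_adj {i j : Fin n} (h : Adj i j) {p : Perm (Fin (n + 1))} (hi : Desc i (t j * p))
    (hj : Desc j (t j * p)) : Desc i p ∧ Desc j (t i * p) := by
  unfold Desc at *
  simp only [mul_inv_rev, t_inv, Equiv.Perm.mul_apply] at *
  simp only [t, Equiv.swap_apply_left, Equiv.swap_apply_right] at hi hj ⊢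
  rcases h with h | h
  · have h₁ : i.succ = j.castSucc := by simpa [Fin.ext_iff] using h
    have h₂ : i.castSucc ≠ j.castSucc := by simp [Fin.ext_iff]; omega
    have h₃ : i.castSucc ≠ j.succ := by simp [Fin.ext_iff]; omega
    have h₄ : j.succ ≠ j.castSucc := by simp [Fin.ext_iff]
    rw [h₁, Equiv.swap_apply_left, Equiv.swap_apply_of_ne_of_ne h₂ h₃] at hi
    rw [h₁, Equiv.swap_apply_right, Equiv.swap_apply_of_ne_of_ne h₃.symm h₄]
    exact ⟨hj.trans hi, hi⟩
  · have h₁ : i.castSucc = j.succ := by simpa [Fin.ext_iff] using h.symm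
    have h₂ : i.succ ≠ j.castSucc := by simp [Fin.ext_iff]; omega
    have h₃ : i.succ ≠ j.succ := by simp [Fin.ext_iff]; omega
    have h₄ : j.castSucc ≠ j.succ := by simp [Fin.ext_iff]
    rw [h₁, Equiv.swap_apply_right, Equiv.swap_apply_of_ne_of_ne h₂ h₃] at hi
    rw [h₁, Equiv.swap_apply_left, Equiv.swap_apply_of_ne_of_ne h₄ h₂.symm]
    exact ⟨hi.trans hj, hi⟩

/-- A left descent of the permutation of a simple braid is a left divisor of the braid. -/
theorem Simple.s_dvd {a : Mon n} (ha : Simple a) {i : Fin n} (hd : Desc i (π a)) : s i ∣ a := by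
  induction hl : len a using Nat.strong_induction_on generalizing a i with
  | _ L ih =>
    subst hl
    rcases eq_one_or_s_mul a with rfl | ⟨j, b, rfl⟩
    · exact absurd (by simpa using hd) (not_desc_one i)
    · have hj := ha.desc
      rw [map_mul, π_s] at hd hj
      have hlen : len b < len (s j * b) := by rw [len_mul, len_s]; omega
      rcases eq_or_far_or_adj i j with rfl | h | h
      · exact ⟨b, rfl⟩
      · obtain ⟨c, rfl⟩ := ih _ hlen ha.right ((desc_far h).1 hd) rfl
        exact ⟨s j * c, far_mul h.symm c⟩
      · obtain ⟨h₁, h₂⟩ := desc_adj h hd hj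
        obtain ⟨c, rfl⟩ := ih _ hlen ha.right h₁ rfl
        rw [map_mul, π_s, ← mul_assoc, t_mul_self, one_mul] at h₂
        obtain ⟨e, rfl⟩ := ih _ (by rw [len_mul, len_s] at hlen ⊢; rw [len_mul, len_s]; omega)
          ha.right.right h₂ rfl
        exact ⟨s j * (s i * e), adj_mul h.symm e⟩

/-- A simple braid is determined by its permutation. -/
theorem Simple.ext {a b : Mon n} (ha : Simple a) (hb : Simple b) (h : π a = π b) : a = b := by
  induction a using mon_induction generalizing b with
  | one =>
    rw [Simple, ← h, map_one, invCount_one] at hb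
    exact (eq_one_of_len hb.symm).symm
  | mul i a ih =>
    obtain ⟨c, rfl⟩ := hb.s_dvd (h ▸ ha.desc)
    rw [ih ha.right hb.right (by simpa only [map_mul, mul_right_inj] using h)]

theorem Simple.s_mul {a : Mon n} (ha : Simple a) {i : Fin n} (h : ¬ s i ∣ a) :
    Simple (s i * a) :=
  simple_s_mul_iff.2 ⟨ha, fun hd => h (ha.s_dvd hd)⟩

/-- The exchange condition for permutations: right multiplication by `t k` can create the descent `i`
only if it equals left multiplication by `t i`. -/
theorem mul_t_eq {i k : Fin n} {p : Perm (Fin (n + 1))} (h₁ : ¬ Desc i p) (h₂ : Desc i (p * t k)) :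
    p * t k = t i * p := by
  unfold Desc at h₁ h₂
  rw [mul_inv_rev, t_inv, Equiv.Perm.mul_apply, Equiv.Perm.mul_apply] at h₂
  have h₃ : p⁻¹ i.castSucc = k.castSucc ∧ p⁻¹ i.succ = k.succ := by
    rw [Fin.lt_def, t_val, t_val] at h₂
    rw [Fin.lt_def] at h₁
    have hne : (p⁻¹ i.succ).val ≠ (p⁻¹ i.castSucc).val := fun h => by
      have := p⁻¹.injective (Fin.ext h)
      simp [Fin.ext_iff] at this
    rw [Fin.ext_iff, Fin.ext_iff, Fin.val_castSucc, Fin.val_succ]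
    split_ifs at h₂ <;> omega
  rw [Equiv.Perm.inv_eq_iff_eq, Equiv.Perm.inv_eq_iff_eq] at h₃
  rw [t, t, h₃.1, h₃.2, Equiv.mul_swap_eq_swap_mul]

/-! ### The Garside element -/

/-- A simple braid that no longer simple braid extends on the right. -/
def IsTop (a : Mon n) : Prop := Simple a ∧ ∀ k, ¬ Simple (a * s k)

theorem IsTop.strictAnti {a : Mon n} (h : IsTop a) : StrictAnti (π a) := by
  rw [Fin.strictAnti_iff_succ_lt]
  intro k
  by_contra hk
  refine h.2 k ?_
  rw [← simple_rev, rev_mul, rev_s, simple_s_mul_iff]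
  refine ⟨simple_rev.2 h.1, ?_⟩
  rwa [Desc, π_rev, inv_inv]

/-- The permutation of a maximal simple braid is order-reversing, hence unique, and so is the braid. -/
theorem IsTop.eq {a b : Mon n} (ha : IsTop a) (hb : IsTop b) : a = b := by
  refine ha.1.ext hb.1 (DFunLike.coe_injective ?_)
  have h := (StrictMono.range_inj (f := fun x => π a (Fin.rev x)) (g := fun x => π b (Fin.rev x))
    (fun x y h => ha.strictAnti (Fin.rev_lt_rev.2 h))
    (fun x y h => hb.strictAnti (Fin.rev_lt_rev.2 h))).1
    (((π a).surjective.comp Fin.rev_surjective).range_eq.trans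
      ((π b).surjective.comp Fin.rev_surjective).range_eq.symm)
  funext x
  simpa using congrFun h (Fin.rev x)

theorem Simple.len_le {a : Mon n} (h : Simple a) :
    len a ≤ Fintype.card (Fin (n + 1) × Fin (n + 1)) := by
  rw [← h]
  exact Finset.card_le_univ _

theorem Simple.exists_dvd_top {a : Mon n} (h : Simple a) : ∃ b, IsTop b ∧ a ∣ b := by
  induction hk : Fintype.card (Fin (n + 1) × Fin (n + 1)) - len a using Nat.strong_induction_on
    generalizing a with
  | _ K ih =>
    by_cases ht : ∀ k, ¬ Simple (a * s k)
    · exact ⟨a, ⟨h, ht⟩, dvd_rfl⟩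
    · push Not at ht
      obtain ⟨k, hs⟩ := ht
      have := hs.len_le
      have hl : len (a * s k) = len a + 1 := len_mul _ _
      obtain ⟨b, hb, hd⟩ := ih _ (by omega) hs rfl
      exact ⟨b, hb, (Dvd.intro _ rfl).trans hd⟩

theorem exists_top : ∃ b : Mon n, IsTop b :=
  let ⟨b, hb, _⟩ := (simple_one (n := n)).exists_dvd_top
  ⟨b, hb⟩

/-- The Garside element (half twist), obtained as the unique maximal simple braid. -/
noncomputable def Δ : Mon n := exists_top.choose

theorem isTop_Δ : IsTop (Δ : Mon n) := exists_top.choose_spec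

theorem dvd_Δ_iff {a : Mon n} : a ∣ Δ ↔ Simple a := by
  refine ⟨fun h => isTop_Δ.1.of_dvd h, fun h => ?_⟩
  obtain ⟨b, hb, hd⟩ := h.exists_dvd_top
  rwa [hb.eq isTop_Δ] at hd

theorem simple_s (i : Fin n) : Simple (s i) := by
  simpa using simple_s_mul_iff.2 ⟨simple_one, by simpa using not_desc_one i⟩

theorem s_dvd_Δ (i : Fin n) : s i ∣ Δ := dvd_Δ_iff.2 (simple_s i)

/-- Write `Δ = σ_i e`. The simple braid `e` is not maximal, so `e σ_j` is simple for some `j`; having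
the length of `Δ`, it equals `Δ`. -/
theorem s_mul_Δ (i : Fin n) : ∃ j, s i * Δ = Δ * s j := by
  obtain ⟨e, he⟩ := s_dvd_Δ i
  have hse : Simple e := (he ▸ isTop_Δ.1 : Simple (s i * e)).right
  have hlen : len (Δ : Mon n) = 1 + len e := by rw [he, len_mul, len_s]
  have : ¬ IsTop e := fun h => by rw [h.eq isTop_Δ] at hlen; omega
  obtain ⟨j, hj⟩ : ∃ j, Simple (e * s j) := by
    by_contra hcon
    push Not at hcon
    exact this ⟨hse, hcon⟩
  obtain ⟨c, hc⟩ := dvd_Δ_iff.2 hj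
  have hlen' := congrArg len hc
  rw [len_mul, len_mul, len_s] at hlen'
  rw [eq_one_of_len (a := c) (by omega), mul_one] at hc
  refine ⟨j, ?_⟩
  calc s i * Δ = s i * e * s j := by rw [hc, mul_assoc]
    _ = Δ * s j := by rw [← he]

theorem mul_Δ (a : Mon n) : ∃ b, a * Δ = Δ * b := by
  induction a using mon_induction with
  | one => exact ⟨1, by simp⟩
  | mul i a ih =>
    obtain ⟨b, hb⟩ := ih
    obtain ⟨j, hj⟩ := s_mul_Δ i
    exact ⟨s j * b, by rw [mul_assoc, hb, ← mul_assoc, hj, mul_assoc]⟩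

theorem s_dvd_mul_Δ (i : Fin n) (a : Mon n) : s i ∣ a * Δ := by
  obtain ⟨b, hb⟩ := mul_Δ a
  rw [hb]
  exact (s_dvd_Δ i).mul_right b

theorem exists_common_mul (a b : Mon n) : ∃ u v, a * u = b * v := by
  induction a using mon_induction_right with
  | one => exact ⟨b, 1, by simp⟩
  | mul i a ih =>
    obtain ⟨u, v, h⟩ := ih
    obtain ⟨c, hc⟩ := s_dvd_mul_Δ i u
    exact ⟨c, v * Δ, by rw [mul_assoc, ← hc, ← mul_assoc, h, mul_assoc]⟩

/-! ### Least common multiples -/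

/-- `m` is the least common right multiple of `a` and `b` for left divisibility, which is what `∣`
means in a noncommutative monoid. -/
def IsLcm (a b m : Mon n) : Prop := ∀ c, m ∣ c ↔ a ∣ c ∧ b ∣ c

theorem mul_dvd_mul_iff {a b c : Mon n} : a * b ∣ a * c ↔ b ∣ c := by
  constructor
  · rintro ⟨d, hd⟩
    exact ⟨d, mul_left_cancel (by rwa [mul_assoc] at hd)⟩
  · rintro ⟨d, rfl⟩
    exact ⟨d, (mul_assoc _ _ _).symm⟩

theorem exists_residue (i j : Fin n) : ∃ r r' : Mon n, s i * r = s j * r' ∧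
    ∀ u v, s i * u = s j * v → ∃ k, u = r * k ∧ v = r' * k := by
  rcases eq_or_far_or_adj i j with rfl | h | h
  · exact ⟨1, 1, rfl, fun u v huv => ⟨u, by simp, by simp [(s_mul_eq_s_mul huv).eq]⟩⟩
  · exact ⟨s j, s i, by simpa using far_mul h 1, fun u v huv => (s_mul_eq_s_mul huv).far h⟩
  · refine ⟨s j * s i, s i * s j, by simpa using adj_mul h 1, fun u v huv => ?_⟩
    simpa only [mul_assoc] using (s_mul_eq_s_mul huv).adj h

/-- Two elements with a common right multiple have a least one, by induction on the length of the
given multiple: after splitting off the first letters and their residues `r`, `r'`, three lcms of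
divisors of shorter elements are combined. -/
theorem exists_lcm_of_dvd {a b c : Mon n} (ha : a ∣ c) (hb : b ∣ c) : ∃ m, IsLcm a b m := by
  induction hL : len c using Nat.strong_induction_on generalizing a b c with
  | _ L ih =>
    subst hL
    rcases eq_one_or_s_mul a with rfl | ⟨i, a, rfl⟩
    · exact ⟨b, fun c => by simp⟩
    rcases eq_one_or_s_mul b with rfl | ⟨j, b, rfl⟩
    · exact ⟨s i * a, fun c => by simp⟩
    obtain ⟨r, r', hr, hres⟩ := exists_residue i j
    have key : ∀ {c}, s i * a ∣ c → s j * b ∣ c →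
        ∃ k, c = s i * (r * k) ∧ a ∣ r * k ∧ b ∣ r' * k := by
      rintro _ ⟨u, rfl⟩ ⟨v, hv⟩
      rw [mul_assoc, mul_assoc] at hv
      obtain ⟨k, h₁, h₂⟩ := hres _ _ hv
      exact ⟨k, by rw [mul_assoc, h₁], ⟨u, h₁.symm⟩, ⟨v, h₂.symm⟩⟩
    obtain ⟨k, rfl, hak, hbk⟩ := key ha hb
    have hl₁ : len (s i * (r * k)) = 1 + len r + len k := by
      rw [len_mul, len_mul, len_s, add_assoc]
    have hl₂ : len (s i * (r * k)) = 1 + len r' + len k := by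
      rw [← mul_assoc, hr, len_mul, len_mul, len_s]
    obtain ⟨m₁, h₁⟩ := ih _ (by rw [hl₁, len_mul]; omega) hak (Dvd.intro k rfl) rfl
    obtain ⟨m₂, h₂⟩ := ih _ (by rw [hl₂, len_mul]; omega) hbk (Dvd.intro k rfl) rfl
    obtain ⟨x, rfl⟩ := ((h₁ m₁).1 dvd_rfl).2
    obtain ⟨y, rfl⟩ := ((h₂ m₂).1 dvd_rfl).2
    have hx : ∀ k, a ∣ r * k ↔ x ∣ k := fun k => by
      rw [← mul_dvd_mul_iff (a := r) (b := x), h₁]; simp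
    have hy : ∀ k, b ∣ r' * k ↔ y ∣ k := fun k => by
      rw [← mul_dvd_mul_iff (a := r') (b := y), h₂]; simp
    obtain ⟨z, hz⟩ := ih _ (by omega) ((hx k).1 hak) ((hy k).1 hbk) rfl
    obtain ⟨hxz, hyz⟩ := (hz z).1 dvd_rfl
    refine ⟨s i * (r * z), fun c => ⟨fun h => ⟨?_, ?_⟩, fun ⟨h, h'⟩ => ?_⟩⟩
    · exact (mul_dvd_mul_iff.2 ((hx z).2 hxz)).trans h
    · refine Dvd.dvd.trans ?_ h
      rw [← mul_assoc, hr, mul_assoc]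
      exact mul_dvd_mul_iff.2 ((hy z).2 hyz)
    · obtain ⟨k, rfl, h₁, h₂⟩ := key h h'
      exact mul_dvd_mul_iff.2 (mul_dvd_mul_iff.2 ((hz k).2 ⟨(hx k).1 h₁, (hy k).1 h₂⟩))

/-! ### Commuting a generator past a positive braid -/

/-- The statement carrying the proof: some `f₀` satisfies `σ_i w f₀ = w f₀ σ_j` for a generator
`σ_j`, and it left-divides every `f` with `σ_i w f ∈ w B⁺`. In other words the lcm of `σ_i w` and
`w` has the form `w f₀ σ_j`. -/
def Good (w : Mon n) (i : Fin n) : Prop :=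
  ∃ f₀ j, s i * w * f₀ = w * f₀ * s j ∧ ∀ f h, s i * w * f = w * h → f₀ ∣ f

/-- The exchange condition for simple braids: if `σ_i` divides the simple braid `w h` but not `w`, then
cancelling `σ_i` deletes one letter of `h`. That letter is the first one at which the prefix of
`w h` becomes divisible by `σ_i`. -/
theorem exchange {w h g : Mon n} {i : Fin n} (hs : Simple (w * h)) (hw : ¬ s i ∣ w)
    (hg : w * h = s i * g) : ∃ a k b, h = a * s k * b ∧ g = w * a * b := by
  induction h using mon_induction generalizing w with
  | one => exact absurd ⟨g, by simpa using hg⟩ hw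
  | mul k h ih =>
    rw [← mul_assoc] at hs hg
    by_cases hd : s i ∣ w * s k
    · have hws : Simple (s i * w) := hs.left.left.s_mul hw
      have hwk : Simple (w * s k) := hs.left
      have h₁ : ¬ Desc i (π w) := (simple_s_mul_iff.1 hws).2
      have h₂ : Desc i (π (w * s k)) := by
        obtain ⟨e, he⟩ := hd
        rw [he] at hwk ⊢
        exact hwk.desc
      have h₃ : π (w * s k) = π (s i * w) := by
        rw [map_mul, map_mul, π_s, π_s] at *
        exact mul_t_eq h₁ h₂
      refine ⟨1, k, h, by simp, mul_left_cancel (a := s i) ?_⟩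
      rw [← hg, hwk.ext hws h₃, mul_one, mul_assoc]
    · obtain ⟨a, l, b, rfl, hb⟩ := ih hs hd hg
      exact ⟨s k * a, l, b, by simp only [mul_assoc], by rw [hb]; simp only [mul_assoc]⟩

/-- Here `σ_i w` is simple as well, so the lcm of `σ_i w` and `w` divides `Δ` and is simple. The exchange
condition writes it as `w a σ_k b = σ_i w a b`. The suffix `b` cancels, so `a` already gives a
common multiple (and `b = 1`, by minimality of the lcm). -/
theorem good_of_not_dvd {w : Mon n} (hw : Simple w) {i : Fin n} (hi : ¬ s i ∣ w) : Good w i := by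
  obtain ⟨m, hm⟩ := exists_lcm_of_dvd (dvd_Δ_iff.2 (hw.s_mul hi)) (dvd_Δ_iff.2 hw)
  have hmΔ : m ∣ Δ := (hm Δ).2 ⟨dvd_Δ_iff.2 (hw.s_mul hi), dvd_Δ_iff.2 hw⟩
  obtain ⟨⟨f₀, hf₀⟩, h₀, hh₀⟩ := (hm m).1 dvd_rfl
  have hms : Simple (w * h₀) := hh₀ ▸ dvd_Δ_iff.1 hmΔ
  obtain ⟨a, k, b, rfl, hb⟩ := exchange (g := w * f₀) hms hi (by rw [← hh₀, hf₀, mul_assoc])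
  rw [mul_assoc] at hb
  obtain rfl := mul_left_cancel hb
  have hwa : s i * w * a = w * a * s k := mul_right_cancel (b := b) (by
    calc s i * w * a * b = m := by rw [hf₀, mul_assoc _ a b]
      _ = w * a * s k * b := by rw [hh₀]; simp only [mul_assoc])
  refine ⟨a, k, hwa, fun f h hfh => ?_⟩
  have : m ∣ s i * w * f := (hm _).2 ⟨⟨f, rfl⟩, ⟨h, hfh⟩⟩
  rw [hf₀, mul_dvd_mul_iff] at this
  exact (Dvd.intro b rfl).trans this

theorem good_of_simple {w : Mon n} (hw : Simple w) (i : Fin n) : Good w i := by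
  by_cases hi : s i ∣ w
  · obtain ⟨w, rfl⟩ := hi
    obtain ⟨f₀, j, h₁, h₂⟩ := good_of_not_dvd (i := i) hw.right
      fun hi => (simple_s_mul_iff.1 hw).2 (by
        obtain ⟨v, rfl⟩ := hi
        exact hw.right.desc)
    refine ⟨f₀, j, ?_, fun f h hfh => h₂ f h (mul_left_cancel (a := s i) ?_)⟩
    · simp only [mul_assoc] at h₁ ⊢
      rw [h₁]
    · simpa only [mul_assoc] using hfh
  · exact good_of_not_dvd hw hi

/-- With `σ_i w f = w f σ_j` and `f y = σ_k z` the lcm of `f` and `σ_k`, the problem for `w σ_k` and `σ_i`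
becomes the one for `y` and `σ_j`. The element `y` divides `Δ`, because `σ_k` divides `f Δ`, so
`good_of_simple` solves the latter. -/
theorem good_mul_s {w : Mon n} {i : Fin n} (hw : Good w i) (k : Fin n) : Good (w * s k) i := by
  obtain ⟨f, j, hf, hmin⟩ := hw
  obtain ⟨m, hm⟩ := exists_lcm_of_dvd (Dvd.intro _ rfl : f ∣ f * Δ) (s_dvd_mul_Δ k f)
  have hmΔ : m ∣ f * Δ := (hm _).2 ⟨Dvd.intro _ rfl, s_dvd_mul_Δ k f⟩
  obtain ⟨⟨y, rfl⟩, z, hz⟩ := (hm m).1 dvd_rfl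
  have hy : ∀ {x}, s k ∣ f * x → y ∣ x := fun {x} hx =>
    mul_dvd_mul_iff.1 ((hm _).2 ⟨Dvd.intro x rfl, hx⟩)
  obtain ⟨g, l, hg, hgmin⟩ := good_of_simple (dvd_Δ_iff.1 (mul_dvd_mul_iff.1 hmΔ)) j
  refine ⟨z * g, l, ?_, fun u v huv => ?_⟩
  · calc s i * (w * s k) * (z * g) = s i * w * (s k * z) * g := by simp only [mul_assoc]
      _ = s i * w * f * (y * g) := by rw [← hz]; simp only [mul_assoc]
      _ = w * f * (s j * y * g) := by rw [hf]; simp only [mul_assoc]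
      _ = w * (f * y) * g * s l := by rw [hg]; simp only [mul_assoc]
      _ = w * s k * (z * g) * s l := by rw [hz]; simp only [mul_assoc]
  · obtain ⟨x, hx⟩ := hmin (s k * u) (s k * v) (by simpa only [mul_assoc] using huv)
    have hx' : s k * v = f * (s j * x) := mul_left_cancel (a := w) (by
      calc w * (s k * v) = s i * w * (s k * u) := by simpa only [mul_assoc] using huv.symm
        _ = s i * w * f * x := by rw [hx]; simp only [mul_assoc]
        _ = w * (f * (s j * x)) := by rw [hf]; simp only [mul_assoc])
    obtain ⟨x, rfl⟩ := hy ⟨u, hx.symm⟩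
    obtain ⟨x', hx''⟩ := hy ⟨v, hx'.symm⟩
    have hgx := hgmin x x' (by rw [mul_assoc, hx''])
    rw [← mul_assoc, hz, mul_assoc] at hx
    rw [mul_left_cancel hx]
    exact mul_dvd_mul_iff.2 hgx

theorem good (w : Mon n) (i : Fin n) : Good w i := by
  induction w using mon_induction_right with
  | one => exact good_of_simple simple_one i
  | mul k w ih => exact good_mul_s ih k

/-! ### The positive braid monoid embeds in the braid group -/

theorem exists_common_left_mul (a b : Mon n) : ∃ u v, u * a = v * b := by
  obtain ⟨u, v, h⟩ := exists_common_mul (rev a) (rev b)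
  have := congrArg rev h
  rw [rev_mul, rev_mul, rev_rev, rev_rev] at this
  exact ⟨_, _, this⟩

/-- Reversal turns common right multiples into the common left multiples of the left Ore condition. -/
noncomputable instance : OreLocalization.OreSet (⊤ : Submonoid (Mon n)) where
  ore_right_cancel _ _ _ h := ⟨1, by rw [mul_right_cancel h]⟩
  oreNum r s := (exists_common_left_mul r s).choose_spec.choose
  oreDenom r s := ⟨(exists_common_left_mul r s).choose, trivial⟩
  ore_eq r s := (exists_common_left_mul r s).choose_spec.choose_spec

theorem numeratorHom_injective :
    Function.Injective (OreLocalization.numeratorHom :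
      Mon n →* OreLocalization (⊤ : Submonoid (Mon n)) (Mon n)) := by
  intro a b h
  rw [OreLocalization.numeratorHom_apply, OreLocalization.numeratorHom_apply,
    OreLocalization.oreDiv_eq_iff] at h
  obtain ⟨u, v, h₁, h₂⟩ := h
  simp only [Submonoid.smul_def, smul_eq_mul, Submonoid.coe_one, mul_one] at h₁ h₂
  rw [h₂] at h₁
  exact (mul_left_cancel h₁).symm

/-- The canonical homomorphism from the presented monoid to the braid group. -/
def toBraid : Mon n →* BraidGroup n :=
  liftHom (σgen n)
    (fun i j h => by
      have : (PresentedGroup.mk (braidRels n)) (FreeGroup.of i * FreeGroup.of j *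
          (FreeGroup.of j * FreeGroup.of i)⁻¹) = 1 :=
        PresentedGroup.one_of_mem ⟨i, j, .inl ⟨h, rfl⟩⟩
      rw [map_mul, map_inv, mul_inv_eq_one, map_mul, map_mul] at this
      exact this)
    (fun i j h => by
      have : (PresentedGroup.mk (braidRels n)) (FreeGroup.of i * FreeGroup.of j * FreeGroup.of i *
          (FreeGroup.of j * FreeGroup.of i * FreeGroup.of j)⁻¹) = 1 :=
        PresentedGroup.one_of_mem ⟨i, j, .inr ⟨h, rfl⟩⟩
      rw [map_mul, map_inv, mul_inv_eq_one, map_mul, map_mul, map_mul, map_mul, mul_assoc,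
        mul_assoc] at this
      exact this)

theorem toBraid_s (i : Fin n) : toBraid (s i) = σgen n i := liftHom_s _ _ _ i

theorem s_mul_s_far {i j : Fin n} (h : Far i j) : s i * s j = s j * s i := by
  simpa using far_mul h 1

theorem s_mul_s_adj {i j : Fin n} (h : Adj i j) : s i * s j * s i = s j * s i * s j := by
  simpa [mul_assoc] using adj_mul h 1

/-- The generator `σ_{i+1}` as a unit of the monoid of fractions. -/
noncomputable def unitOf (i : Fin n) : (OreLocalization (⊤ : Submonoid (Mon n)) (Mon n))ˣ :=
  OreLocalization.numeratorUnit ⟨s i, trivial⟩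

theorem val_unitOf (i : Fin n) :
    ((unitOf i : (OreLocalization (⊤ : Submonoid (Mon n)) (Mon n))ˣ) :
      OreLocalization (⊤ : Submonoid (Mon n)) (Mon n)) = OreLocalization.numeratorHom (s i) := rfl

/-- The homomorphism from the braid group to the units of the monoid of fractions of `Mon n`. -/
noncomputable def fromBraid :
    BraidGroup n →* (OreLocalization (⊤ : Submonoid (Mon n)) (Mon n))ˣ :=
  PresentedGroup.toGroup (f := unitOf) (by
    rintro r ⟨i, j, ⟨h, rfl⟩ | ⟨h, rfl⟩⟩ <;>
    rw [map_mul, map_inv, mul_inv_eq_one, Units.ext_iff] <;>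
    simp only [map_mul, FreeGroup.lift_apply_of, Units.val_mul, val_unitOf] <;>
    simp only [← map_mul]
    · rw [s_mul_s_far h]
    · rw [s_mul_s_adj h])

theorem fromBraid_toBraid (a : Mon n) :
    (fromBraid (toBraid a) : OreLocalization (⊤ : Submonoid (Mon n)) (Mon n)) =
      OreLocalization.numeratorHom a := by
  induction a using mon_induction with
  | one => rw [map_one, map_one, map_one, Units.val_one]
  | mul i a ih =>
    rw [map_mul, map_mul, Units.val_mul, ih, map_mul, toBraid_s]
    congr 1
    rw [fromBraid, σgen, PresentedGroup.toGroup.of, val_unitOf]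

theorem toBraid_injective : Function.Injective (toBraid : Mon n → BraidGroup n) := by
  intro a b h
  apply numeratorHom_injective
  rw [← fromBraid_toBraid, h, fromBraid_toBraid]

theorem mem_braidPos_iff {x : BraidGroup n} : x ∈ braidPos n ↔ ∃ a, toBraid a = x := by
  constructor
  · intro hx
    refine (Submonoid.closure_le (S := MonoidHom.mrange toBraid)).2 ?_ hx
    rintro _ ⟨i, rfl⟩
    exact ⟨s i, toBraid_s i⟩
  · rintro ⟨a, rfl⟩
    induction a using mon_induction with
    | one => rw [map_one]; exact one_mem _
    | mul i a ih =>
      rw [map_mul, toBraid_s]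
      exact mul_mem (Submonoid.subset_closure ⟨i, rfl⟩) ih

end PosBraid

open PosBraid in
/-- Lemma 6: let `d = d_w^l(σ_i)` be the minimal positive braid with
`σ_i w d = w d σ_{i'}`. If positive braids `f`, `h` satisfy `σ_i w f = w h`, then
`d` left-divides `f`, `d σ_{i'}` left-divides `h`, and if `f = d x` then `h = d σ_{i'} x`. -/
theorem statement8 (n : ℕ) (w d f h : BraidGroup n) (i i' : Fin n)
    (hw : w ∈ braidPos n) (hd : d ∈ braidPos n)
    (hcom : σgen n i * w * d = w * d * σgen n i')
    (hmin : ∀ X ∈ braidPos n,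
      (∃ i'' : Fin n, σgen n i * w * X = w * X * σgen n i'') → LDvd d X)
    (hf : f ∈ braidPos n) (hh : h ∈ braidPos n)
    (heq : σgen n i * w * f = w * h) :
    LDvd d f ∧ LDvd (d * σgen n i') h ∧
      ∀ x ∈ braidPos n, f = d * x → h = d * σgen n i' * x := by
  obtain ⟨w, rfl⟩ := mem_braidPos_iff.1 hw
  obtain ⟨f, rfl⟩ := mem_braidPos_iff.1 hf
  obtain ⟨h, rfl⟩ := mem_braidPos_iff.1 hh
  obtain ⟨f₀, j, h₁, h₂⟩ := good w i
  have hdf₀ : LDvd d (toBraid f₀) := by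
    refine hmin _ (mem_braidPos_iff.2 ⟨f₀, rfl⟩) ⟨j, ?_⟩
    simp only [← toBraid_s, ← map_mul, h₁]
  have hf₀f : f₀ ∣ f := by
    refine h₂ f h (toBraid_injective ?_)
    simpa only [map_mul, toBraid_s] using heq
  have hquot : ∀ x, toBraid f = d * x → toBraid h = d * σgen n i' * x := by
    intro x hx
    apply mul_left_cancel (a := toBraid w)
    rw [← heq, hx, ← mul_assoc, hcom]
    simp only [mul_assoc]
  obtain ⟨c, hc, hc'⟩ := hdf₀
  obtain ⟨e, rfl⟩ := hf₀f
  have hce : c * toBraid e ∈ braidPos n := mul_mem hc (mem_braidPos_iff.2 ⟨e, rfl⟩)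
  have hfd : toBraid (f₀ * e) = d * (c * toBraid e) := by rw [map_mul, hc', mul_assoc]
  exact ⟨⟨_, hce, hfd⟩, ⟨_, hce, hquot _ hfd⟩, fun x _ hx => hquot x hx⟩
end

section
/- (Lemma 7) Let X, Y ∈ B_{n+1}^+ with X →^k Y. Then there exist k positive braids d_1,…,d_k ∈ B_{n+1}^+ and k generators σ_{i_1},…,σ_{i_k} such that X d_1 d_2 ⋯ d_k = Y d_1 σ_{i_1} d_2 σ_{i_2} ⋯ d_k σ_{i_k}. -/
/-- The generators indexed from zero by all natural numbers: `braidS n j` is `σ_{j+1}` for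
`j < n`, and `1` beyond the range. -/
def braidS (n j : ℕ) : BraidGroup n := if h : j < n then σgen n ⟨j, h⟩ else 1

/-- The prefix product `σ_1 ⋯ σ_m`; `braidP n n` is the element `δ`. -/
def braidP (n : ℕ) : ℕ → BraidGroup n
  | 0 => 1
  | m + 1 => braidP n m * braidS n m

lemma braidS_fin {n : ℕ} (i : Fin n) : braidS n i = σgen n i := by
  simp [braidS]

lemma σgen_mem {n : ℕ} (i : Fin n) : σgen n i ∈ braidPos n :=
  Submonoid.subset_closure ⟨i, rfl⟩

lemma braidS_mem (n j : ℕ) : braidS n j ∈ braidPos n := by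
  unfold braidS
  split_ifs with h
  · exact σgen_mem _
  · exact one_mem _

lemma braidP_mem (n m : ℕ) : braidP n m ∈ braidPos n := by
  induction m with
  | zero => exact one_mem _
  | succ m ih => exact mul_mem ih (braidS_mem n m)

lemma braidS_comm {n i j : ℕ} (hij : i + 1 < j) (hj : j < n) :
    braidS n i * braidS n j = braidS n j * braidS n i := by
  have hi : i < n := by omega
  simp only [braidS, hi, hj, dif_pos, σgen, PresentedGroup.of, ← map_mul]
  rw [← mul_inv_eq_one, ← map_inv, ← map_mul]
  exact PresentedGroup.one_of_mem ⟨⟨i, hi⟩, ⟨j, hj⟩, Or.inl ⟨Or.inl hij, rfl⟩⟩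

lemma braidS_braid {n i : ℕ} (hi' : i + 1 < n) :
    braidS n i * braidS n (i + 1) * braidS n i =
      braidS n (i + 1) * braidS n i * braidS n (i + 1) := by
  have hi : i < n := by omega
  simp only [braidS, hi, hi', dif_pos, σgen, PresentedGroup.of, ← map_mul]
  rw [← mul_inv_eq_one, ← map_inv, ← map_mul]
  exact PresentedGroup.one_of_mem ⟨⟨i, hi⟩, ⟨i + 1, hi'⟩, Or.inr ⟨Or.inl rfl, rfl⟩⟩

lemma braidP_comm {n m j : ℕ} (hm : m < j) (hj : j < n) :
    braidP n m * braidS n j = braidS n j * braidP n m := by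
  induction m with
  | zero => simp [braidP]
  | succ m ih =>
    rw [braidP, mul_assoc, braidS_comm hm hj, ← mul_assoc, ih (by omega), mul_assoc]

/-- Conjugation by a prefix product shifts the index of the generators strictly inside it. -/
lemma braidP_shift {n m i : ℕ} (hm : m ≤ n) (hi : i + 1 < m) :
    braidP n m * braidS n i = braidS n (i + 1) * braidP n m := by
  induction m with
  | zero => omega
  | succ m ih =>
    rcases Nat.lt_or_ge (i + 1) m with h | h
    · rw [braidP, mul_assoc, ← braidS_comm h (by omega), ← mul_assoc, ih (by omega) h, mul_assoc]
    · obtain rfl : m = i + 1 := by omega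
      calc braidP n (i + 1 + 1) * braidS n i
          = braidP n i * (braidS n i * braidS n (i + 1) * braidS n i) := by
            simp only [braidP, mul_assoc]
        _ = (braidP n i * braidS n (i + 1)) * (braidS n i * braidS n (i + 1)) := by
            rw [braidS_braid (by omega)]
            simp only [mul_assoc]
        _ = braidS n (i + 1) * braidP n (i + 1 + 1) := by
            rw [braidP_comm (by omega) (by omega)]
            simp only [braidP, mul_assoc]

lemma braidP_delta {n m : ℕ} (hm : m + 1 ≤ n) :
    braidS n 0 * braidP n n * braidP n m = braidP n (m + 1) * braidP n n := by
  induction m with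
  | zero => simp [braidP]
  | succ m ih =>
    rw [braidP, ← mul_assoc, ih (by omega), mul_assoc, braidP_shift le_rfl (by omega),
      ← mul_assoc]
    rfl

/-- `δ²` carries the last generator to the first one. -/
lemma delta_sq (m : ℕ) :
    braidP (m + 1) (m + 1) ^ 2 * braidS (m + 1) m =
      braidS (m + 1) 0 * braidP (m + 1) (m + 1) ^ 2 := by
  have h := braidP_delta (n := m + 1) (m := m) le_rfl
  calc braidP (m + 1) (m + 1) ^ 2 * braidS (m + 1) m
      = braidS (m + 1) 0 * braidP (m + 1) (m + 1) * braidP (m + 1) m * braidS (m + 1) m := by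
        rw [pow_two, h]
    _ = braidS (m + 1) 0 * braidP (m + 1) (m + 1) * braidP (m + 1) (m + 1) := mul_assoc _ _ _
    _ = _ := by rw [pow_two, mul_assoc]

lemma delta_pow_shift {n i a : ℕ} (h : i + a < n) :
    braidP n n ^ a * braidS n i = braidS n (i + a) * braidP n n ^ a := by
  induction a with
  | zero => simp
  | succ a ih =>
    rw [pow_succ', mul_assoc, ih (by omega), ← mul_assoc, braidP_shift le_rfl (by omega),
      mul_assoc, ← add_assoc]

lemma fullTwist_comm_gen {n i : ℕ} (hi : i < n) :
    braidP n n ^ (n + 1) * braidS n i = braidS n i * braidP n n ^ (n + 1) := by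
  obtain ⟨a, rfl⟩ : ∃ a, n = i + a + 1 := ⟨n - i - 1, by omega⟩
  set δ := braidP (i + a + 1) (i + a + 1) with hδ
  have h1 : δ ^ a * braidS (i + a + 1) i = braidS (i + a + 1) (i + a) * δ ^ a :=
    delta_pow_shift (by omega)
  have h2 : δ ^ 2 * braidS (i + a + 1) (i + a) = braidS (i + a + 1) 0 * δ ^ 2 :=
    delta_sq (i + a)
  have h3 : δ ^ i * braidS (i + a + 1) 0 = braidS (i + a + 1) i * δ ^ i := by
    have := delta_pow_shift (n := i + a + 1) (i := 0) (a := i) (by omega)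
    rwa [zero_add] at this
  have e : δ ^ (i + a + 1 + 1) = δ ^ i * (δ ^ 2 * δ ^ a) := by
    rw [← pow_add, ← pow_add]
    congr 1
    omega
  rw [e, mul_assoc, mul_assoc, h1, ← mul_assoc (δ ^ 2), h2, ← mul_assoc (δ ^ i), ← mul_assoc (δ ^ i),
    h3]
  simp only [mul_assoc]

lemma fullTwist_comm {n : ℕ} {x : BraidGroup n} (hx : x ∈ braidPos n) :
    braidP n n ^ (n + 1) * x = x * braidP n n ^ (n + 1) := by
  induction hx using Submonoid.closure_induction with
  | mem x h =>
    obtain ⟨i, rfl⟩ := h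
    rw [← braidS_fin]
    exact fullTwist_comm_gen i.2
  | one => simp
  | mul x y _ _ hx hy => rw [← mul_assoc, hx, mul_assoc, hy, mul_assoc]

lemma braidP_split {n i m : ℕ} (h : i < m) :
    ∃ q ∈ braidPos n, braidP n m = braidP n i * braidS n i * q := by
  induction m with
  | zero => omega
  | succ m ih =>
    rcases Nat.lt_or_ge i m with h' | h'
    · obtain ⟨q, hq, e⟩ := ih h'
      exact ⟨q * braidS n m, mul_mem hq (braidS_mem n m), by rw [braidP, e, mul_assoc]⟩
    · obtain rfl : m = i := by omega
      exact ⟨1, one_mem _, by rw [mul_one, braidP]⟩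

lemma gen_dvd_fullTwist {n : ℕ} (i : Fin n) :
    ∃ c ∈ braidPos n, σgen n i * c = braidP n n ^ (n + 1) := by
  obtain ⟨q, hq, e⟩ := braidP_split (n := n) i.2
  refine ⟨q * braidP n n ^ n * braidP n i,
    mul_mem (mul_mem hq (pow_mem (braidP_mem n n) n)) (braidP_mem n i), ?_⟩
  -- Cyclic permutation: move the prefix `braidP n i` of the central word to its end.
  apply mul_left_cancel (a := braidP n i)
  rw [← fullTwist_comm (braidP_mem n i), pow_succ']
  rw [braidS_fin] at e
  generalize braidP n n ^ n = z
  rw [e]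
  simp only [mul_assoc]

/-- Every positive braid left-divides some positive braid commuting with all positive braids. -/
lemma exists_mul_central {n : ℕ} {v : BraidGroup n} (hv : v ∈ braidPos n) :
    ∃ d ∈ braidPos n, ∀ x ∈ braidPos n, v * d * x = x * (v * d) := by
  induction hv using Submonoid.closure_induction with
  | mem v h =>
    obtain ⟨i, rfl⟩ := h
    obtain ⟨c, hc, e⟩ := gen_dvd_fullTwist i
    exact ⟨c, hc, fun x hx => by rw [e, fullTwist_comm hx]⟩
  | one => exact ⟨1, one_mem _, by simp⟩
  | mul v w hv _ ihv ihw =>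
    obtain ⟨d, hd, hd'⟩ := ihv
    obtain ⟨e, he, he'⟩ := ihw
    refine ⟨e * d, mul_mem he hd, fun x hx => ?_⟩
    -- `v w e d = (v d) (w e)`, because `w e` commutes with `d`.
    have key : v * w * (e * d) = v * d * (w * e) := by
      rw [mul_assoc v d, ← he' d hd]
      simp only [mul_assoc]
    rw [key, mul_assoc, he' x hx, ← mul_assoc, hd' x hx, mul_assoc]

/-- Lemma 7: if `X →^k Y` then there exist positive braids `d_1, …, d_k` and
generators `σ_{i_1}, …, σ_{i_k}` with `X d_1 ⋯ d_k = Y d_1 σ_{i_1} ⋯ d_k σ_{i_k}`. -/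
theorem statement9 (n k : ℕ) (X Y : BraidGroup n) (h : KSeq n k X Y) :
    ∃ (d : Fin k → BraidGroup n) (idx : Fin k → Fin n),
      (∀ j, d j ∈ braidPos n) ∧
      X * (List.ofFn d).prod = Y * (List.ofFn fun j => d j * σgen n (idx j)).prod := by
  induction h with
  | zero X => exact ⟨Fin.elim0, Fin.elim0, fun j => j.elim0, by simp⟩
  | succ k u v Y i hu hv h ih =>
    obtain ⟨d, idx, hd, e⟩ := ih
    have hD : (List.ofFn d).prod ∈ braidPos n := by
      apply Submonoid.list_prod_mem
      intro x hx
      obtain ⟨j, rfl⟩ := (List.mem_ofFn' _ _).1 hx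
      exact hd j
    obtain ⟨c, hc, hcomm⟩ := exists_mul_central (mul_mem hv hD)
    refine ⟨Fin.snoc d c, Fin.snoc idx i, fun j => ?_, ?_⟩
    · refine Fin.lastCases ?_ (fun j => ?_) j
      · simpa using hc
      · simpa using hd j
    · have hi := hcomm _ (σgen_mem i)
      simp only [List.ofFn_succ', Fin.snoc_castSucc, Fin.snoc_last, List.concat_eq_append,
        List.prod_append, List.prod_singleton]
      calc u * σgen n i * v * ((List.ofFn d).prod * c)
          = u * (σgen n i * (v * (List.ofFn d).prod * c)) := by simp only [mul_assoc]
        _ = (u * v * (List.ofFn d).prod) * (c * σgen n i) := by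
            rw [← hi]
            simp only [mul_assoc]
        _ = _ := by rw [e, mul_assoc]
end
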